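/- arXiv:1612.07148 — 15 statements merged into one kernel-verified Lean document; each statement's English description precedes it below -/
import Mathlib

section
/- Let R be a commutative ring and, for i = 1, 2, 3, 4, let σᵢ⁺, σᵢ⁻, τᵢ⁺, τᵢ⁻ be elements of R. Define zᵢ = σᵢ⁺ + σᵢ⁻, wᵢ = τᵢ⁺ + τᵢ⁻, uᵢ = σᵢ⁺ + τᵢ⁻, vᵢ = σᵢ⁻ + τᵢ⁺. Then z₁z₂z₃z₄ + w₁w₂w₃w₄ − u₁v₂z₃z₄ + u₁w₂v₃z₄ − u₁w₂w₃v₄ − z₁u₂v₃z₄ + z₁u₂w₃v₄ − v₁u₂w₃w₄ − z₁z₂u₃v₄ + v₁z₂u₃w₄ − w₁v₂u₃w₄ − v₁z₂z₃u₄ + w₁v₂z₃u₄ − w₁w₂v₃u₄ + v₁u₂v₃u₄ + u₁v₂u₃v₄ = ∏ᵢ₌₁⁴(σᵢ⁺ − τᵢ⁺) + ∏ᵢ₌₁⁴(σᵢ⁻ − τᵢ⁻). -/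
theorem box_cutting_equation {R : Type*} [CommRing R]
    (σp σm τp τm : Fin 4 → R)
    (z w u v : Fin 4 → R)
    (hz : ∀ i, z i = σp i + σm i)
    (hw : ∀ i, w i = τp i + τm i)
    (hu : ∀ i, u i = σp i + τm i)
    (hv : ∀ i, v i = σm i + τp i) :
    z 0 * z 1 * z 2 * z 3 + w 0 * w 1 * w 2 * w 3
      - u 0 * v 1 * z 2 * z 3 + u 0 * w 1 * v 2 * z 3 - u 0 * w 1 * w 2 * v 3
      - z 0 * u 1 * v 2 * z 3 + z 0 * u 1 * w 2 * v 3 - v 0 * u 1 * w 2 * w 3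
      - z 0 * z 1 * u 2 * v 3 + v 0 * z 1 * u 2 * w 3 - w 0 * v 1 * u 2 * w 3
      - v 0 * z 1 * z 2 * u 3 + w 0 * v 1 * z 2 * u 3 - w 0 * w 1 * v 2 * u 3
      + v 0 * u 1 * v 2 * u 3 + u 0 * v 1 * u 2 * v 3
    = (∏ i : Fin 4, (σp i - τp i)) + (∏ i : Fin 4, (σm i - τm i)) := by
  simp only [Fin.prod_univ_four, hz, hw, hu, hv]
  ring
end

section
/- Let R be a commutative ring, n ≥ 1 a natural number, and σ⁺, σ⁻, τ⁺, τ⁻ : Fin n → R four families of elements. For a subset M ⊆ Fin n (the set of marked vertices) and each leg i ∈ Fin n (oriented from vertex i to vertex i+1, indices mod n), define the propagator p(M,i) by: p(M,i) = σᵢ⁺ + σᵢ⁻ if i ∉ M and i+1 ∉ M; p(M,i) = σᵢ⁺ + τᵢ⁻ if i ∉ M and i+1 ∈ M; p(M,i) = σᵢ⁻ + τᵢ⁺ if i ∈ M and i+1 ∉ M; p(M,i) = τᵢ⁺ + τᵢ⁻ if i ∈ M and i+1 ∈ M. Then ∑_{M ⊆ Fin n} (−1)^{|M|} ∏_{i ∈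 Fin n} p(M,i) = ∏_{i ∈ Fin n} (σᵢ⁺ − τᵢ⁺) + ∏_{i ∈ Fin n} (σᵢ⁻ − τᵢ⁻). -/
/-- The propagator of leg `i` (oriented from vertex `i` to vertex `i + 1`, indices mod `n`)
in the one-loop diagram, for a marking `M` of the vertices. -/
def oneLoopPropagator {n : ℕ} {R : Type*} [CommRing R]
    (σp σm τp τm : Fin (n + 1) → R) (M : Finset (Fin (n + 1))) (i : Fin (n + 1)) : R :=
  if i ∈ M then
    (if i + 1 ∈ M then τp i + τm i else σm i + τp i)
  else
    (if i + 1 ∈ M then σp i + τm i else σp i + σm i)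

/-- A nonempty subset of the cycle which is closed under successor is everything. -/
theorem cycle_closed_eq_univ {n : ℕ} (S : Finset (Fin (n + 1))) (a : Fin (n + 1)) (ha : a ∈ S)
    (h : ∀ j, j ∈ S → j + 1 ∈ S) : S = Finset.univ := by
  have key : ∀ k : Fin (n + 1), a + k ∈ S := by
    intro k
    induction k using Fin.induction with
    | zero => simpa using ha
    | succ k ih =>
      have := h _ ih
      rwa [add_assoc, Fin.coeSucc_eq_succ] at this
  ext b
  simp only [Finset.mem_univ, iff_true]
  have := key (b - a)
  simpa using this

/-- Sum over markings of a product of vertex factors. -/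
theorem sum_marking_prod {n : ℕ} {R : Type*} [CommRing R] (F G : Fin (n + 1) → R) :
    ∑ M : Finset (Fin (n + 1)), ∏ j, (if j ∈ M then F j else G j) = ∏ j, (F j + G j) := by
  rw [Finset.prod_add, Finset.powerset_univ]
  refine Finset.sum_congr rfl fun M _ => ?_
  rw [Finset.prod_ite]
  congr 1
  · congr 1; ext; simp
  · congr 1; ext; simp

theorem oneLoop_cutting_equation (n : ℕ) {R : Type*} [CommRing R]
    (σp σm τp τm : Fin (n + 1) → R) :
    ∑ M : Finset (Fin (n + 1)),
        (-1 : R) ^ M.card * ∏ i : Fin (n + 1), oneLoopPropagator σp σm τp τm M i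
    = (∏ i : Fin (n + 1), (σp i - τp i)) + (∏ i : Fin (n + 1), (σm i - τm i)) := by
  have h1 : ∀ M : Finset (Fin (n + 1)), 
      (-1 : R) ^ M.card * ∏ i : Fin (n + 1), oneLoopPropagator σp σm τp τm M i =
      ∑ S : Finset (Fin (n + 1)), ∏ j, (if j ∈ M then
        -((if j ∈ S then τp j else 1) * (if j - 1 ∈ S then 1 else τm (j - 1))) else
        ((if j ∈ S then σp j else 1) * (if j - 1 ∈ S then 1 else σm (j - 1)))) := by
    intro M
    have e : ∀ i, oneLoopPropagator σp σm τp τm M i =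
        (if i ∈ M then τp i else σp i) + (if i + 1 ∈ M then τm i else σm i) := by
      intro i
      unfold oneLoopPropagator
      split_ifs <;> ring
    have hs : (-1 : R) ^ M.card = ∏ j, (if j ∈ M then (-1 : R) else 1) := by
      simp
    simp_rw [e]
    rw [← sum_marking_prod, Finset.mul_sum]
    refine Finset.sum_congr rfl fun S _ => ?_
    have h2 : ∏ j, (if j ∈ S then (if j ∈ M then τp j else σp j)
          else (if j + 1 ∈ M then τm j else σm j)) =
        (∏ j, (if j ∈ S then (if j ∈ M then τp j else σp j) else 1)) *
        ∏ j, (if j - 1 ∈ S then 1 else (if j ∈ M then τm (j - 1) else σm (j - 1))) := by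
      rw [← Equiv.prod_comp (Equiv.addRight (1 : Fin (n + 1))) (fun j => 
        (if j - 1 ∈ S then 1 else (if j ∈ M then τm (j - 1) else σm (j - 1)))),
        ← Finset.prod_mul_distrib]
      refine Finset.prod_congr rfl fun j _ => ?_
      simp only [Equiv.coe_addRight, add_sub_cancel_right]
      split_ifs <;> ring
    rw [h2, hs, ← Finset.prod_mul_distrib, ← Finset.prod_mul_distrib]
    refine Finset.prod_congr rfl fun j _ => ?_
    split_ifs <;> ring
  simp_rw [h1]
  rw [Finset.sum_comm]
  simp_rw [sum_marking_prod]
  rw [Finset.sum_eq_add (Finset.univ : Finset (Fin (n + 1))) ∅]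
  · congr 1
    · refine Finset.prod_congr rfl fun j _ => ?_
      simp
      ring
    · rw [← Equiv.prod_comp (Equiv.subRight (1 : Fin (n + 1))) (fun j => σm j - τm j)]
      refine Finset.prod_congr rfl fun j _ => ?_
      simp
      ring
  · exact Finset.univ_nonempty.ne_empty
  · rintro S - ⟨hu, he⟩
    obtain ⟨a, ha⟩ := Finset.nonempty_iff_ne_empty.mpr he
    have : ∃ j, j ∈ S ∧ j + 1 ∉ S := by
      by_contra! hc
      exact hu (cycle_closed_eq_univ S a ha hc)
    obtain ⟨j, hj, hj'⟩ := this
    refine Finset.prod_eq_zero (Finset.mem_univ (j + 1)) ?_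
    simp [hj, hj']
  · simp
  · simp
end

section
/- Let V be a finite type, G a simple graph on V that is a tree, and for each edge of G fix an orientation, i.e., an ordered pair (tail, head) of its two endpoints. Let R be a commutative ring and let σ⁺, σ⁻, τ⁺, τ⁻ assign to each edge e of G four elements σₑ⁺, σₑ⁻, τₑ⁺, τₑ⁻ of R. For a subset M ⊆ V and an edge e with tail a and head b, define the propagator p(M,e) by: σₑ⁺ + σₑ⁻ if a ∉ M, b ∉ M; σₑ⁺ + τₑ⁻ if a ∉ M, b ∈ M; σₑ⁻ + τₑ⁺ if a ∈ M, b ∉ M; τₑ⁺ + τₑ⁻ if a ∈ M, b ∈ M. Then ∑_{M ⊆ V} (−1)^{|M|} ∏_{e ∈ edges of G} p(M,e) = 0. -/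
/-- The propagator of an oriented edge `e` (with tail `tail e` and head `head e`)
for a marking `M` of the vertices. -/
def treePropagator {V : Type*} [DecidableEq V] {R : Type*} [CommRing R]
    (tail head : Sym2 V → V) (σp σm τp τm : Sym2 V → R)
    (M : Finset V) (e : Sym2 V) : R :=
  if tail e ∈ M then
    (if head e ∈ M then τp e + τm e else σm e + τp e)
  else
    (if head e ∈ M then σp e + τm e else σp e + σm e)

theorem tree_cutting_equation {V : Type*} [Fintype V] [DecidableEq V]
    (G : SimpleGraph V) [DecidableRel G.Adj] (hG : G.IsTree)
    (tail head : Sym2 V → V)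
    (horient : ∀ e ∈ G.edgeSet, e = s(tail e, head e))
    {R : Type*} [CommRing R] (σp σm τp τm : Sym2 V → R) :
    ∑ M : Finset V,
        (-1 : R) ^ M.card * ∏ e ∈ G.edgeFinset, treePropagator tail head σp σm τp τm M e
    = 0 := by
  classical
  have hp : ∀ (M : Finset V) (e : Sym2 V), treePropagator tail head σp σm τp τm M e =
      (if tail e ∈ M then τp e else σp e) + (if head e ∈ M then τm e else σm e) := by
    intro M e
    unfold treePropagator
    split_ifs <;> ring
  simp only [hp, Finset.prod_add, Finset.mul_sum]
  rw [Finset.sum_comm]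
  refine Finset.sum_eq_zero fun t ht => ?_
  rw [Finset.mem_powerset] at ht
  -- the selected endpoints miss some vertex
  have hlt : (G.edgeFinset.image (fun e => if e ∈ t then tail e else head e)).card
      < (Finset.univ : Finset V).card := by
    have h1 := hG.card_edgeFinset
    have h2 := Finset.card_image_le (s := G.edgeFinset)
      (f := fun e => if e ∈ t then tail e else head e)
    rw [Finset.card_univ]
    omega
  obtain ⟨v, -, hv⟩ := Finset.exists_mem_notMem_of_card_lt_card hlt
  have hv' : ∀ e ∈ G.edgeFinset, (if e ∈ t then tail e else head e) ≠ v := by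
    intro e he h
    exact hv (Finset.mem_image.2 ⟨e, he, h⟩)
  have htail : ∀ e ∈ t, tail e ≠ v := by
    intro e he
    have := hv' e (ht he)
    rwa [if_pos he] at this
  have hhead : ∀ e ∈ G.edgeFinset \ t, head e ≠ v := by
    intro e he
    rw [Finset.mem_sdiff] at he
    have := hv' e he.1
    rwa [if_neg he.2] at this
  -- pair the markings with and without `v`
  rw [← Finset.powerset_univ, ← Finset.insert_erase (Finset.mem_univ v),
    Finset.sum_powerset_insert (Finset.notMem_erase v _), ← Finset.sum_add_distrib]
  refine Finset.sum_eq_zero fun M hM => ?_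
  have hvM : v ∉ M := fun h => Finset.notMem_erase v _ (Finset.mem_powerset.1 hM h)
  have e1 : ∏ e ∈ t, (if tail e ∈ insert v M then τp e else σp e) =
      ∏ e ∈ t, (if tail e ∈ M then τp e else σp e) :=
    Finset.prod_congr rfl fun e he => by simp [Finset.mem_insert, htail e he]
  have e2 : ∏ e ∈ G.edgeFinset \ t, (if head e ∈ insert v M then τm e else σm e) =
      ∏ e ∈ G.edgeFinset \ t, (if head e ∈ M then τm e else σm e) :=
    Finset.prod_congr rfl fun e he => by simp [Finset.mem_insert, hhead e he]
  rw [e1, e2, Finset.card_insert_of_notMem hvM]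
  ring
end

section
/- Work in the multivariate polynomial ring over ℤ in the 16 variables σᵢ⁺, σᵢ⁻, τᵢ⁺, τᵢ⁻ (i = 1, 2, 3, 4), and set zᵢ = σᵢ⁺ + σᵢ⁻, wᵢ = τᵢ⁺ + τᵢ⁻, uᵢ = σᵢ⁺ + τᵢ⁻, vᵢ = σᵢ⁻ + τᵢ⁺. Then the polynomial z₁z₂z₃z₄ − w₁w₂w₃w₄ − u₁v₂z₃z₄ − v₁z₂u₃v₄ − z₁u₂v₃u₄ + v₁u₂w₃w₄ + u₁w₂v₃u₄ + w₁v₂u₃v₄ lies in the ℤ-submodule spanned by the following monomials: (A) ρ₁ρ₂ρ₃η₄ with ρᵢ ∈ {σᵢ⁺, τᵢ⁺} for i = 1, 2, 3 and η₄ ∈ {σ₄⁺, σ₄⁻, τ₄⁺, τ₄⁻}; (B) ρ₁ρ₂ρ₃η₄ with ρᵢ ∈ {σᵢ⁻, τᵢ⁻} for i = 1, 2, 3 and η₄ arbitrary among the four variables of leg 4; (C) η₁η₂ρ₃ρ₄ with ρ₃ ∈ {σ₃⁺, τ₃⁺}, ρ₄ ∈ {σ₄⁺, τ₄⁺} and η₁,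 η₂ arbitrary among the four variables of legs 1 and 2 respectively; (D) η₁η₂ρ₃ρ₄ with ρ₃ ∈ {σ₃⁻, τ₃⁻}, ρ₄ ∈ {σ₄⁻, τ₄⁻} and η₁, η₂ arbitrary. -/
open MvPolynomial

/-- The 16 variables `σᵢ⁺, σᵢ⁻, τᵢ⁺, τᵢ⁻` (`i = 1,…,4`) of the chestnut diagram:
the first index is the leg, the second selects among `σ⁺, σ⁻, τ⁺, τ⁻`. -/
noncomputable def chSp (i : Fin 4) : MvPolynomial (Fin 4 × Fin 4) ℤ := X (i, 0)
noncomputable def chSm (i : Fin 4) : MvPolynomial (Fin 4 × Fin 4) ℤ := X (i, 1)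
noncomputable def chTp (i : Fin 4) : MvPolynomial (Fin 4 × Fin 4) ℤ := X (i, 2)
noncomputable def chTm (i : Fin 4) : MvPolynomial (Fin 4 × Fin 4) ℤ := X (i, 3)

noncomputable def chZ (i : Fin 4) : MvPolynomial (Fin 4 × Fin 4) ℤ := chSp i + chSm i
noncomputable def chW (i : Fin 4) : MvPolynomial (Fin 4 × Fin 4) ℤ := chTp i + chTm i
noncomputable def chU (i : Fin 4) : MvPolynomial (Fin 4 × Fin 4) ℤ := chSp i + chTm i
noncomputable def chV (i : Fin 4) : MvPolynomial (Fin 4 × Fin 4) ℤ := chSm i + chTp i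

/-- The positively polarized variables `{σᵢ⁺, τᵢ⁺}` of leg `i`. -/
def chPlus (i : Fin 4) : Set (MvPolynomial (Fin 4 × Fin 4) ℤ) := {chSp i, chTp i}
/-- The negatively polarized variables `{σᵢ⁻, τᵢ⁻}` of leg `i`. -/
def chMinus (i : Fin 4) : Set (MvPolynomial (Fin 4 × Fin 4) ℤ) := {chSm i, chTm i}
/-- All four variables of leg `i`. -/
def chAny (i : Fin 4) : Set (MvPolynomial (Fin 4 × Fin 4) ℤ) :=
  {chSp i, chSm i, chTp i, chTm i}

/-- The polarized monomials of the chestnut diagram, whose oriented loops are `123` and `34`. -/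
def chestnutPolarized : Set (MvPolynomial (Fin 4 × Fin 4) ℤ) :=
  {q | ∃ r₁ ∈ chPlus 0, ∃ r₂ ∈ chPlus 1, ∃ r₃ ∈ chPlus 2, ∃ e₄ ∈ chAny 3,
      q = r₁ * r₂ * r₃ * e₄} ∪
  {q | ∃ r₁ ∈ chMinus 0, ∃ r₂ ∈ chMinus 1, ∃ r₃ ∈ chMinus 2, ∃ e₄ ∈ chAny 3,
      q = r₁ * r₂ * r₃ * e₄} ∪
  {q | ∃ e₁ ∈ chAny 0, ∃ e₂ ∈ chAny 1, ∃ r₃ ∈ chPlus 2, ∃ r₄ ∈ chPlus 3,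
      q = e₁ * e₂ * r₃ * r₄} ∪
  {q | ∃ e₁ ∈ chAny 0, ∃ e₂ ∈ chAny 1, ∃ r₃ ∈ chMinus 2, ∃ r₄ ∈ chMinus 3,
      q = e₁ * e₂ * r₃ * r₄}

theorem chestnut_cutting_equation :
    chZ 0 * chZ 1 * chZ 2 * chZ 3 - chW 0 * chW 1 * chW 2 * chW 3
      - chU 0 * chV 1 * chZ 2 * chZ 3 - chV 0 * chZ 1 * chU 2 * chV 3
      - chZ 0 * chU 1 * chV 2 * chU 3 + chV 0 * chU 1 * chW 2 * chW 3
      + chU 0 * chW 1 * chV 2 * chU 3 + chW 0 * chV 1 * chU 2 * chV 3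
    ∈ Submodule.span ℤ chestnutPolarized := by
  -- Work modulo the span: every polarized monomial maps to zero in the quotient.
  have key : ∀ q ∈ chestnutPolarized, (Submodule.span ℤ chestnutPolarized).mkQ q = 0 := by
    intro q hq
    rw [Submodule.mkQ_apply, Submodule.Quotient.mk_eq_zero]
    exact Submodule.subset_span hq
  have hA : ∀ r₁ r₂ r₃ e₄, r₁ ∈ chPlus 0 → r₂ ∈ chPlus 1 → r₃ ∈ chPlus 2 → e₄ ∈ chAny 3 →
      (Submodule.span ℤ chestnutPolarized).mkQ (r₁ * r₂ * r₃ * e₄) = 0 :=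
    fun r₁ r₂ r₃ e₄ h₁ h₂ h₃ h₄ =>
      key _ (Or.inl (Or.inl (Or.inl ⟨r₁, h₁, r₂, h₂, r₃, h₃, e₄, h₄, rfl⟩)))
  have hB : ∀ r₁ r₂ r₃ e₄, r₁ ∈ chMinus 0 → r₂ ∈ chMinus 1 → r₃ ∈ chMinus 2 → e₄ ∈ chAny 3 →
      (Submodule.span ℤ chestnutPolarized).mkQ (r₁ * r₂ * r₃ * e₄) = 0 :=
    fun r₁ r₂ r₃ e₄ h₁ h₂ h₃ h₄ =>
      key _ (Or.inl (Or.inl (Or.inr ⟨r₁, h₁, r₂, h₂, r₃, h₃, e₄, h₄, rfl⟩)))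
  have hC : ∀ e₁ e₂ r₃ r₄, e₁ ∈ chAny 0 → e₂ ∈ chAny 1 → r₃ ∈ chPlus 2 → r₄ ∈ chPlus 3 →
      (Submodule.span ℤ chestnutPolarized).mkQ (e₁ * e₂ * r₃ * r₄) = 0 :=
    fun e₁ e₂ r₃ r₄ h₁ h₂ h₃ h₄ =>
      key _ (Or.inl (Or.inr ⟨e₁, h₁, e₂, h₂, r₃, h₃, r₄, h₄, rfl⟩))
  have hD : ∀ e₁ e₂ r₃ r₄, e₁ ∈ chAny 0 → e₂ ∈ chAny 1 → r₃ ∈ chMinus 2 → r₄ ∈ chMinus 3 →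
      (Submodule.span ℤ chestnutPolarized).mkQ (e₁ * e₂ * r₃ * r₄) = 0 :=
    fun e₁ e₂ r₃ r₄ h₁ h₂ h₃ h₄ =>
      key _ (Or.inr ⟨e₁, h₁, e₂, h₂, r₃, h₃, r₄, h₄, rfl⟩)
  have sp : ∀ i, chSp i ∈ chPlus i := fun i => by simp [chPlus]
  have tp : ∀ i, chTp i ∈ chPlus i := fun i => by simp [chPlus]
  have sm : ∀ i, chSm i ∈ chMinus i := fun i => by simp [chMinus]
  have tm : ∀ i, chTm i ∈ chMinus i := fun i => by simp [chMinus]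
  have a₁ : ∀ i, chSp i ∈ chAny i := fun i => by simp [chAny]
  have a₂ : ∀ i, chSm i ∈ chAny i := fun i => by simp [chAny]
  have a₃ : ∀ i, chTp i ∈ chAny i := fun i => by simp [chAny]
  have a₄ : ∀ i, chTm i ∈ chAny i := fun i => by simp [chAny]
  rw [← Submodule.Quotient.mk_eq_zero, ← Submodule.mkQ_apply]
  simp only [chZ, chW, chU, chV, mul_add, add_mul, map_add, map_sub]
  -- Kill the polarized monomials; the remaining ones cancel in pairs.
  simp only [hA, hB, hC, hD, sp, tp, sm, tm, a₁, a₂, a₃, a₄]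
  abel
end

section
/- Work in the multivariate polynomial ring over ℤ in the 20 variables σᵢ⁺, σᵢ⁻, τᵢ⁺, τᵢ⁻ (i = 1, …, 5), and set zᵢ = σᵢ⁺ + σᵢ⁻, wᵢ = τᵢ⁺ + τᵢ⁻, uᵢ = σᵢ⁺ + τᵢ⁻, vᵢ = σᵢ⁻ + τᵢ⁺. Then the polynomial z₁z₂z₃z₄z₅ + w₁w₂w₃w₄w₅ − u₁v₂z₃z₄z₅ − z₁u₂v₃z₄u₅ − z₁z₂z₃u₄v₅ − v₁z₂u₃v₄z₅ + u₁w₂v₃z₄u₅ + u₁v₂z₃u₄v₅ + w₁v₂u₃v₄z₅ + v₁u₂w₃v₄u₅ + z₁u₂v₃u₄w₅ + v₁z₂u₃w₄v₅ − v₁u₂w₃w₄w₅ − w₁v₂u₃w₄v₅ − w₁w₂w₃v₄u₅ − u₁w₂v₃u₄w₅ lies in the ℤ-submodule spanned by the following monomials: (A) ρ₁ρ₂ρ₃η₄η₅ with ρᵢ ∈ {σᵢ⁺, τᵢ⁺} for i = 1, 2, 3 and η₄, η₅ arbitrary among the four variables of legs 4 and 5; (B) ρ₁ρ₂ρ₃η₄η₅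 with ρᵢ ∈ {σᵢ⁻, τᵢ⁻} for i = 1, 2, 3 and η₄, η₅ arbitrary; (C) η₁η₂ρ₃ρ₄ρ₅ with ρᵢ ∈ {σᵢ⁺, τᵢ⁺} for i = 3, 4, 5 and η₁, η₂ arbitrary; (D) η₁η₂ρ₃ρ₄ρ₅ with ρᵢ ∈ {σᵢ⁻, τᵢ⁻} for i = 3, 4, 5 and η₁, η₂ arbitrary. -/
open MvPolynomial

/-- The 20 variables `σᵢ⁺, σᵢ⁻, τᵢ⁺, τᵢ⁻` (`i = 1,…,5`) of the two-loop self-energy diagram: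
the first index is the leg, the second selects among `σ⁺, σ⁻, τ⁺, τ⁻`. -/
noncomputable def seSp (i : Fin 5) : MvPolynomial (Fin 5 × Fin 4) ℤ := X (i, 0)
noncomputable def seSm (i : Fin 5) : MvPolynomial (Fin 5 × Fin 4) ℤ := X (i, 1)
noncomputable def seTp (i : Fin 5) : MvPolynomial (Fin 5 × Fin 4) ℤ := X (i, 2)
noncomputable def seTm (i : Fin 5) : MvPolynomial (Fin 5 × Fin 4) ℤ := X (i, 3)

noncomputable def seZ (i : Fin 5) : MvPolynomial (Fin 5 × Fin 4) ℤ := seSp i + seSm i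
noncomputable def seW (i : Fin 5) : MvPolynomial (Fin 5 × Fin 4) ℤ := seTp i + seTm i
noncomputable def seU (i : Fin 5) : MvPolynomial (Fin 5 × Fin 4) ℤ := seSp i + seTm i
noncomputable def seV (i : Fin 5) : MvPolynomial (Fin 5 × Fin 4) ℤ := seSm i + seTp i

/-- The positively polarized variables `{σᵢ⁺, τᵢ⁺}` of leg `i`. -/
def sePlus (i : Fin 5) : Set (MvPolynomial (Fin 5 × Fin 4) ℤ) := {seSp i, seTp i}
/-- The negatively polarized variables `{σᵢ⁻, τᵢ⁻}` of leg `i`. -/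
def seMinus (i : Fin 5) : Set (MvPolynomial (Fin 5 × Fin 4) ℤ) := {seSm i, seTm i}
/-- All four variables of leg `i`. -/
def seAny (i : Fin 5) : Set (MvPolynomial (Fin 5 × Fin 4) ℤ) :=
  {seSp i, seSm i, seTp i, seTm i}

/-- The polarized monomials of the two-loop self-energy diagram,
whose oriented loops are `123` and `345`. -/
def selfEnergyPolarized : Set (MvPolynomial (Fin 5 × Fin 4) ℤ) :=
  {q | ∃ r₁ ∈ sePlus 0, ∃ r₂ ∈ sePlus 1, ∃ r₃ ∈ sePlus 2, ∃ e₄ ∈ seAny 3, ∃ e₅ ∈ seAny 4,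
      q = r₁ * r₂ * r₃ * e₄ * e₅} ∪
  {q | ∃ r₁ ∈ seMinus 0, ∃ r₂ ∈ seMinus 1, ∃ r₃ ∈ seMinus 2, ∃ e₄ ∈ seAny 3, ∃ e₅ ∈ seAny 4,
      q = r₁ * r₂ * r₃ * e₄ * e₅} ∪
  {q | ∃ e₁ ∈ seAny 0, ∃ e₂ ∈ seAny 1, ∃ r₃ ∈ sePlus 2, ∃ r₄ ∈ sePlus 3, ∃ r₅ ∈ sePlus 4,
      q = e₁ * e₂ * r₃ * r₄ * r₅} ∪
  {q | ∃ e₁ ∈ seAny 0, ∃ e₂ ∈ seAny 1, ∃ r₃ ∈ seMinus 2, ∃ r₄ ∈ seMinus 3, ∃ r₅ ∈ seMinus 4,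
      q = e₁ * e₂ * r₃ * r₄ * r₅}

/-- The signed sum over markings, with the four propagators of each leg as arguments. -/
def seF {R : Type*} [CommRing R] (z w u v : Fin 5 → R) : R :=
    z 0 * z 1 * z 2 * z 3 * z 4 + w 0 * w 1 * w 2 * w 3 * w 4
      - u 0 * v 1 * z 2 * z 3 * z 4 - z 0 * u 1 * v 2 * z 3 * u 4
      - z 0 * z 1 * z 2 * u 3 * v 4 - v 0 * z 1 * u 2 * v 3 * z 4
      + u 0 * w 1 * v 2 * z 3 * u 4 + u 0 * v 1 * z 2 * u 3 * v 4
      + w 0 * v 1 * u 2 * v 3 * z 4 + v 0 * u 1 * w 2 * v 3 * u 4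
      + z 0 * u 1 * v 2 * u 3 * w 4 + v 0 * z 1 * u 2 * w 3 * v 4
      - v 0 * u 1 * w 2 * w 3 * w 4 - w 0 * v 1 * u 2 * w 3 * v 4
      - w 0 * w 1 * w 2 * v 3 * u 4 - u 0 * w 1 * v 2 * u 3 * w 4

/-- Membership criterion for a signed sum whose sixteen terms all lie in a submodule. -/
lemma seF_mem {R : Type*} [CommRing R] (S : Submodule ℤ R) (z w u v : Fin 5 → R)
    (Q : Fin 5 → Set R)
    (hS : ∀ a ∈ Q 0, ∀ b ∈ Q 1, ∀ c ∈ Q 2, ∀ d ∈ Q 3, ∀ e ∈ Q 4, a * b * c * d * e ∈ S)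
    (hz : ∀ i, z i ∈ Q i) (hw : ∀ i, w i ∈ Q i) (hu : ∀ i, u i ∈ Q i) (hv : ∀ i, v i ∈ Q i) :
    seF z w u v ∈ S := by
  unfold seF
  repeat' first | apply Submodule.sub_mem | apply Submodule.add_mem
  all_goals
    apply hS <;> first | apply hz | apply hw | apply hu | apply hv

/-- Split a signed sum by polarization; the unpolarized sign patterns cancel. -/
lemma seF_split {R : Type*} [CommRing R] (a b c d : Fin 5 → R) :
    seF (fun i => a i + b i) (fun i => c i + d i) (fun i => a i + d i) (fun i => b i + c i) =
      seF ![a 0, a 1, a 2, a 3 + b 3, a 4 + b 4] ![c 0, c 1, c 2, c 3 + d 3, c 4 + d 4]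
        ![a 0, a 1, a 2, a 3 + d 3, a 4 + d 4] ![c 0, c 1, c 2, b 3 + c 3, b 4 + c 4]
      + seF ![b 0, b 1, b 2, a 3 + b 3, a 4 + b 4] ![d 0, d 1, d 2, c 3 + d 3, c 4 + d 4]
        ![d 0, d 1, d 2, a 3 + d 3, a 4 + d 4] ![b 0, b 1, b 2, b 3 + c 3, b 4 + c 4]
      + seF ![a 0 + b 0, a 1 + b 1, a 2, a 3, a 4] ![c 0 + d 0, c 1 + d 1, c 2, c 3, c 4]
        ![a 0 + d 0, a 1 + d 1, a 2, a 3, a 4] ![b 0 + c 0, b 1 + c 1, c 2, c 3, c 4]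
      + seF ![a 0 + b 0, a 1 + b 1, b 2, b 3, b 4] ![c 0 + d 0, c 1 + d 1, d 2, d 3, d 4]
        ![a 0 + d 0, a 1 + d 1, d 2, d 3, d 4] ![b 0 + c 0, b 1 + c 1, b 2, b 3, b 4]
      - seF a c a c - seF b d d b := by
  simp only [seF, Matrix.cons_val]
  generalize a 0 = a0, a 1 = a1, a 2 = a2, a 3 = a3, a 4 = a4
  generalize b 0 = b0, b 1 = b1, b 2 = b2, b 3 = b3, b 4 = b4
  generalize c 0 = c0, c 1 = c1, c 2 = c2, c 3 = c3, c 4 = c4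
  generalize d 0 = d0, d 1 = d1, d 2 = d2, d 3 = d3, d 4 = d4
  ring

/-- Products with two factors in spans lie in the span of the products. -/
lemma mul_mem_of_span {R : Type*} [CommRing R] (S : Submodule ℤ R) (P Q : Set R) (f : R)
    (h : ∀ x ∈ P, ∀ y ∈ Q, f * (x * y) ∈ S) (x y : R)
    (hx : x ∈ Submodule.span ℤ P) (hy : y ∈ Submodule.span ℤ Q) : f * (x * y) ∈ S := by
  induction hx using Submodule.span_induction with
  | zero => simp
  | add p q _ _ hp hq => rw [add_mul, mul_add]; exact S.add_mem hp hq
  | smul n p _ hp => rw [smul_mul_assoc, mul_smul_comm]; exact S.smul_mem n hp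
  | mem p hp =>
    induction hy using Submodule.span_induction with
    | zero => simp
    | add s t _ _ hs ht => rw [mul_add, mul_add]; exact S.add_mem hs ht
    | smul n s _ hs => rw [mul_smul_comm, mul_smul_comm]; exact S.smul_mem n hs
    | mem s hs => exact h p hp s hs

lemma memA (z w u v : Fin 5 → MvPolynomial (Fin 5 × Fin 4) ℤ)
    (Q : Fin 5 → Set (MvPolynomial (Fin 5 × Fin 4) ℤ))
    (hQ : Q = ![sePlus 0, sePlus 1, sePlus 2, (Submodule.span ℤ (seAny 3) : Set (MvPolynomial (Fin 5 × Fin 4) ℤ)), (Submodule.span ℤ (seAny 4) : Set (MvPolynomial (Fin 5 × Fin 4) ℤ))])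
    (hz : ∀ i, z i ∈ Q i) (hw : ∀ i, w i ∈ Q i) (hu : ∀ i, u i ∈ Q i) (hv : ∀ i, v i ∈ Q i) :
    seF z w u v ∈ Submodule.span ℤ selfEnergyPolarized := by
  refine seF_mem _ z w u v Q ?_ hz hw hu hv
  subst hQ
  intro x₁ h₁ x₂ h₂ x₃ h₃ x₄ h₄ x₅ h₅
  rw [mul_assoc (x₁ * x₂ * x₃)]
  refine mul_mem_of_span _ (seAny 3) (seAny 4) _ ?_ _ _ h₄ h₅
  intro e he e' he'
  rw [← mul_assoc]
  exact Submodule.subset_span (Or.inl <| Or.inl <| Or.inl ⟨x₁, h₁, x₂, h₂, x₃, h₃, e, he, e', he', rfl⟩)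

lemma memB (z w u v : Fin 5 → MvPolynomial (Fin 5 × Fin 4) ℤ)
    (Q : Fin 5 → Set (MvPolynomial (Fin 5 × Fin 4) ℤ))
    (hQ : Q = ![seMinus 0, seMinus 1, seMinus 2, (Submodule.span ℤ (seAny 3) : Set (MvPolynomial (Fin 5 × Fin 4) ℤ)), (Submodule.span ℤ (seAny 4) : Set (MvPolynomial (Fin 5 × Fin 4) ℤ))])
    (hz : ∀ i, z i ∈ Q i) (hw : ∀ i, w i ∈ Q i) (hu : ∀ i, u i ∈ Q i) (hv : ∀ i, v i ∈ Q i) :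
    seF z w u v ∈ Submodule.span ℤ selfEnergyPolarized := by
  refine seF_mem _ z w u v Q ?_ hz hw hu hv
  subst hQ
  intro x₁ h₁ x₂ h₂ x₃ h₃ x₄ h₄ x₅ h₅
  rw [mul_assoc (x₁ * x₂ * x₃)]
  refine mul_mem_of_span _ (seAny 3) (seAny 4) _ ?_ _ _ h₄ h₅
  intro e he e' he'
  rw [← mul_assoc]
  exact Submodule.subset_span (Or.inl <| Or.inl <| Or.inr ⟨x₁, h₁, x₂, h₂, x₃, h₃, e, he, e', he', rfl⟩)

lemma memC (z w u v : Fin 5 → MvPolynomial (Fin 5 × Fin 4) ℤ)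
    (Q : Fin 5 → Set (MvPolynomial (Fin 5 × Fin 4) ℤ))
    (hQ : Q = ![(Submodule.span ℤ (seAny 0) : Set (MvPolynomial (Fin 5 × Fin 4) ℤ)), (Submodule.span ℤ (seAny 1) : Set (MvPolynomial (Fin 5 × Fin 4) ℤ)), sePlus 2, sePlus 3, sePlus 4])
    (hz : ∀ i, z i ∈ Q i) (hw : ∀ i, w i ∈ Q i) (hu : ∀ i, u i ∈ Q i) (hv : ∀ i, v i ∈ Q i) :
    seF z w u v ∈ Submodule.span ℤ selfEnergyPolarized := by
  refine seF_mem _ z w u v Q ?_ hz hw hu hv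
  subst hQ
  intro x₁ h₁ x₂ h₂ x₃ h₃ x₄ h₄ x₅ h₅
  rw [show x₁ * x₂ * x₃ * x₄ * x₅ = x₃ * x₄ * x₅ * (x₁ * x₂) by ring]
  refine mul_mem_of_span _ (seAny 0) (seAny 1) _ ?_ _ _ h₁ h₂
  intro e he e' he'
  rw [show x₃ * x₄ * x₅ * (e * e') = e * e' * x₃ * x₄ * x₅ by ring]
  exact Submodule.subset_span (Or.inl <| Or.inr ⟨e, he, e', he', x₃, h₃, x₄, h₄, x₅, h₅, rfl⟩)

lemma memD (z w u v : Fin 5 → MvPolynomial (Fin 5 × Fin 4) ℤ)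
    (Q : Fin 5 → Set (MvPolynomial (Fin 5 × Fin 4) ℤ))
    (hQ : Q = ![(Submodule.span ℤ (seAny 0) : Set (MvPolynomial (Fin 5 × Fin 4) ℤ)), (Submodule.span ℤ (seAny 1) : Set (MvPolynomial (Fin 5 × Fin 4) ℤ)), seMinus 2, seMinus 3, seMinus 4])
    (hz : ∀ i, z i ∈ Q i) (hw : ∀ i, w i ∈ Q i) (hu : ∀ i, u i ∈ Q i) (hv : ∀ i, v i ∈ Q i) :
    seF z w u v ∈ Submodule.span ℤ selfEnergyPolarized := by
  refine seF_mem _ z w u v Q ?_ hz hw hu hv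
  subst hQ
  intro x₁ h₁ x₂ h₂ x₃ h₃ x₄ h₄ x₅ h₅
  rw [show x₁ * x₂ * x₃ * x₄ * x₅ = x₃ * x₄ * x₅ * (x₁ * x₂) by ring]
  refine mul_mem_of_span _ (seAny 0) (seAny 1) _ ?_ _ _ h₁ h₂
  intro e he e' he'
  rw [show x₃ * x₄ * x₅ * (e * e') = e * e' * x₃ * x₄ * x₅ by ring]
  exact Submodule.subset_span (Or.inr ⟨e, he, e', he', x₃, h₃, x₄, h₄, x₅, h₅, rfl⟩)

lemma seSp_plus (i : Fin 5) : seSp i ∈ sePlus i := by simp [sePlus]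
lemma seTp_plus (i : Fin 5) : seTp i ∈ sePlus i := by simp [sePlus]
lemma seSm_minus (i : Fin 5) : seSm i ∈ seMinus i := by simp [seMinus]
lemma seTm_minus (i : Fin 5) : seTm i ∈ seMinus i := by simp [seMinus]
lemma seSp_any (i : Fin 5) : seSp i ∈ Submodule.span ℤ (seAny i) :=
  Submodule.subset_span (by simp [seAny])
lemma seSm_any (i : Fin 5) : seSm i ∈ Submodule.span ℤ (seAny i) :=
  Submodule.subset_span (by simp [seAny])
lemma seTp_any (i : Fin 5) : seTp i ∈ Submodule.span ℤ (seAny i) :=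
  Submodule.subset_span (by simp [seAny])
lemma seTm_any (i : Fin 5) : seTm i ∈ Submodule.span ℤ (seAny i) :=
  Submodule.subset_span (by simp [seAny])

lemma forall_five {p : Fin 5 → Prop} (h0 : p 0) (h1 : p 1) (h2 : p 2) (h3 : p 3) (h4 : p 4) :
    ∀ i, p i := by
  intro i
  fin_cases i
  exacts [h0, h1, h2, h3, h4]

/-- The signed sum lies in the polarized span, for abstract polar components. -/
lemma seF_core (a b c d : Fin 5 → MvPolynomial (Fin 5 × Fin 4) ℤ)
    (ha : ∀ i, a i ∈ sePlus i) (hb : ∀ i, b i ∈ seMinus i)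
    (hc : ∀ i, c i ∈ sePlus i) (hd : ∀ i, d i ∈ seMinus i)
    (ha2 : ∀ i, a i ∈ Submodule.span ℤ (seAny i)) (hb2 : ∀ i, b i ∈ Submodule.span ℤ (seAny i))
    (hc2 : ∀ i, c i ∈ Submodule.span ℤ (seAny i)) (hd2 : ∀ i, d i ∈ Submodule.span ℤ (seAny i)) :
    seF (fun i => a i + b i) (fun i => c i + d i) (fun i => a i + d i) (fun i => b i + c i) ∈
      Submodule.span ℤ selfEnergyPolarized := by
  rw [seF_split]
  refine Submodule.sub_mem _ (Submodule.sub_mem _ (Submodule.add_mem _ (Submodule.add_mem _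
    (Submodule.add_mem _ (memA _ _ _ _ _ rfl ?_ ?_ ?_ ?_) (memB _ _ _ _ _ rfl ?_ ?_ ?_ ?_))
    (memC _ _ _ _ _ rfl ?_ ?_ ?_ ?_)) (memD _ _ _ _ _ rfl ?_ ?_ ?_ ?_))
    (memA _ _ _ _ _ rfl ?_ ?_ ?_ ?_)) (memB _ _ _ _ _ rfl ?_ ?_ ?_ ?_)
  · exact forall_five (ha 0) (ha 1) (ha 2)
      (Submodule.add_mem _ (ha2 3) (hb2 3)) (Submodule.add_mem _ (ha2 4) (hb2 4))
  · exact forall_five (hc 0) (hc 1) (hc 2)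
      (Submodule.add_mem _ (hc2 3) (hd2 3)) (Submodule.add_mem _ (hc2 4) (hd2 4))
  · exact forall_five (ha 0) (ha 1) (ha 2)
      (Submodule.add_mem _ (ha2 3) (hd2 3)) (Submodule.add_mem _ (ha2 4) (hd2 4))
  · exact forall_five (hc 0) (hc 1) (hc 2)
      (Submodule.add_mem _ (hb2 3) (hc2 3)) (Submodule.add_mem _ (hb2 4) (hc2 4))
  · exact forall_five (hb 0) (hb 1) (hb 2)
      (Submodule.add_mem _ (ha2 3) (hb2 3)) (Submodule.add_mem _ (ha2 4) (hb2 4))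
  · exact forall_five (hd 0) (hd 1) (hd 2)
      (Submodule.add_mem _ (hc2 3) (hd2 3)) (Submodule.add_mem _ (hc2 4) (hd2 4))
  · exact forall_five (hd 0) (hd 1) (hd 2)
      (Submodule.add_mem _ (ha2 3) (hd2 3)) (Submodule.add_mem _ (ha2 4) (hd2 4))
  · exact forall_five (hb 0) (hb 1) (hb 2)
      (Submodule.add_mem _ (hb2 3) (hc2 3)) (Submodule.add_mem _ (hb2 4) (hc2 4))
  · exact forall_five (Submodule.add_mem _ (ha2 0) (hb2 0)) (Submodule.add_mem _ (ha2 1) (hb2 1)) (ha 2)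
      (ha 3) (ha 4)
  · exact forall_five (Submodule.add_mem _ (hc2 0) (hd2 0)) (Submodule.add_mem _ (hc2 1) (hd2 1)) (hc 2)
      (hc 3) (hc 4)
  · exact forall_five (Submodule.add_mem _ (ha2 0) (hd2 0)) (Submodule.add_mem _ (ha2 1) (hd2 1)) (ha 2)
      (ha 3) (ha 4)
  · exact forall_five (Submodule.add_mem _ (hb2 0) (hc2 0)) (Submodule.add_mem _ (hb2 1) (hc2 1)) (hc 2)
      (hc 3) (hc 4)
  · exact forall_five (Submodule.add_mem _ (ha2 0) (hb2 0)) (Submodule.add_mem _ (ha2 1) (hb2 1)) (hb 2)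
      (hb 3) (hb 4)
  · exact forall_five (Submodule.add_mem _ (hc2 0) (hd2 0)) (Submodule.add_mem _ (hc2 1) (hd2 1)) (hd 2)
      (hd 3) (hd 4)
  · exact forall_five (Submodule.add_mem _ (ha2 0) (hd2 0)) (Submodule.add_mem _ (ha2 1) (hd2 1)) (hd 2)
      (hd 3) (hd 4)
  · exact forall_five (Submodule.add_mem _ (hb2 0) (hc2 0)) (Submodule.add_mem _ (hb2 1) (hc2 1)) (hb 2)
      (hb 3) (hb 4)
  · exact forall_five (ha 0) (ha 1) (ha 2)
      (ha2 3) (ha2 4)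
  · exact forall_five (hc 0) (hc 1) (hc 2)
      (hc2 3) (hc2 4)
  · exact forall_five (ha 0) (ha 1) (ha 2)
      (ha2 3) (ha2 4)
  · exact forall_five (hc 0) (hc 1) (hc 2)
      (hc2 3) (hc2 4)
  · exact forall_five (hb 0) (hb 1) (hb 2)
      (hb2 3) (hb2 4)
  · exact forall_five (hd 0) (hd 1) (hd 2)
      (hd2 3) (hd2 4)
  · exact forall_five (hd 0) (hd 1) (hd 2)
      (hd2 3) (hd2 4)
  · exact forall_five (hb 0) (hb 1) (hb 2)
      (hb2 3) (hb2 4)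

theorem selfEnergy_cutting_equation :
    seZ 0 * seZ 1 * seZ 2 * seZ 3 * seZ 4 + seW 0 * seW 1 * seW 2 * seW 3 * seW 4
      - seU 0 * seV 1 * seZ 2 * seZ 3 * seZ 4 - seZ 0 * seU 1 * seV 2 * seZ 3 * seU 4
      - seZ 0 * seZ 1 * seZ 2 * seU 3 * seV 4 - seV 0 * seZ 1 * seU 2 * seV 3 * seZ 4
      + seU 0 * seW 1 * seV 2 * seZ 3 * seU 4 + seU 0 * seV 1 * seZ 2 * seU 3 * seV 4
      + seW 0 * seV 1 * seU 2 * seV 3 * seZ 4 + seV 0 * seU 1 * seW 2 * seV 3 * seU 4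
      + seZ 0 * seU 1 * seV 2 * seU 3 * seW 4 + seV 0 * seZ 1 * seU 2 * seW 3 * seV 4
      - seV 0 * seU 1 * seW 2 * seW 3 * seW 4 - seW 0 * seV 1 * seU 2 * seW 3 * seV 4
      - seW 0 * seW 1 * seW 2 * seV 3 * seU 4 - seU 0 * seW 1 * seV 2 * seU 3 * seW 4
    ∈ Submodule.span ℤ selfEnergyPolarized := by
  exact seF_core seSp seSm seTp seTm seSp_plus seSm_minus seTp_plus seTm_minus
    seSp_any seSm_any seTp_any seTm_any
end

section
/- Let n ≥ 2 be a natural number, c : Fin n → ℝ, and θ : Fin n → ℂ. Assume that either Im(θ i) > 0 for all i, or Im(θ i) < 0 for all i. Then the function e ↦ ∏_{i} 1/(e + c i − θ i) is (Bochner) integrable on ℝ and ∫_{ℝ} ∏_{i} 1/(e + c i − θ i) de = 0. -/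
open MeasureTheory Complex

lemma pol_integral_zero (f : ℂ → ℂ) (C : ℝ) (hC : 0 ≤ C)
    (hd : ∀ z : ℂ, z.im ≤ 0 → DifferentiableAt ℂ f z)
    (hb : ∀ z : ℂ, z.im ≤ 0 → ‖f z‖ ≤ C * (1 + ‖z‖ ^ 2)⁻¹) :
    Integrable (fun e : ℝ => f e) ∧ ∫ e : ℝ, f e = 0 := by
  have hcont : Continuous (fun e : ℝ => f e) := by
    rw [continuous_iff_continuousAt]
    intro x
    exact ContinuousAt.comp (f := fun e : ℝ => (e : ℂ)) (hd x (by simp)).continuousAt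
      Complex.continuous_ofReal.continuousAt
  have hint : Integrable (fun e : ℝ => f e) := by
    refine (integrable_inv_one_add_sq.const_mul C).mono' hcont.aestronglyMeasurable ?_
    refine Filter.Eventually.of_forall fun x => ?_
    simpa using hb x (by simp)
  refine ⟨hint, ?_⟩
  have h1 := intervalIntegral_tendsto_integral hint Filter.tendsto_neg_atTop_atBot Filter.tendsto_id
  refine tendsto_nhds_unique h1 ?_
  have h2 : Filter.Tendsto (fun R : ℝ => 4 * C * R⁻¹) Filter.atTop (nhds 0) := by
    simpa using tendsto_inv_atTop_zero.const_mul (4 * C)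
  refine squeeze_zero_norm' ?_ h2
  filter_upwards [Filter.eventually_gt_atTop 0] with R hR
  have hrect := Complex.integral_boundary_rect_eq_zero_of_differentiableOn f
    (⟨-R, -R⟩ : ℂ) (⟨R, 0⟩ : ℂ) (by
      intro z hz
      refine (hd z ?_).differentiableWithinAt
      have := hz.2
      simp only [Set.mem_preimage] at this
      rw [Set.uIcc_of_le (by linarith)] at this
      exact this.2)
  simp only [ofReal_zero, zero_mul, add_zero] at hrect
  have key : ∀ z : ℂ, z.im ≤ 0 → R ≤ ‖z‖ → ‖f z‖ ≤ C * (R ^ 2)⁻¹ := by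
    intro z hz hRz
    refine (hb z hz).trans ?_
    gcongr
    nlinarith
  have b1 : ‖∫ x in (-R)..R, f (x + ((-R : ℝ) : ℂ) * I)‖ ≤ C * (R ^ 2)⁻¹ * |R - -R| := by
    refine intervalIntegral.norm_integral_le_of_norm_le_const fun x hx => ?_
    refine key _ (by simp; linarith) ?_
    refine le_trans ?_ (Complex.abs_im_le_norm _)
    simp [le_abs_self]
  have b2 : ‖∫ y in (-R)..0, f ((R : ℂ) + y * I)‖ ≤ C * (R ^ 2)⁻¹ * |0 - -R| := by
    refine intervalIntegral.norm_integral_le_of_norm_le_const fun x hx => ?_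
    rw [Set.uIoc_of_le (by linarith)] at hx
    refine key _ (by simpa using hx.2) ?_
    refine le_trans ?_ (Complex.abs_re_le_norm _)
    simp [le_abs_self]
  have b3 : ‖∫ y in (-R)..0, f (((-R : ℝ) : ℂ) + y * I)‖ ≤ C * (R ^ 2)⁻¹ * |0 - -R| := by
    refine intervalIntegral.norm_integral_le_of_norm_le_const fun x hx => ?_
    rw [Set.uIoc_of_le (by linarith)] at hx
    refine key _ (by simpa using hx.2) ?_
    refine le_trans ?_ (Complex.abs_re_le_norm _)
    simp [le_abs_self]
  simp only [id]
  have e1 : ∫ x in (-R)..R, f x = (∫ x in (-R)..R, f (x + ((-R : ℝ) : ℂ) * I))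
      + I • (∫ y in (-R)..0, f ((R : ℂ) + y * I))
      - I • ∫ y in (-R)..0, f (((-R : ℝ) : ℂ) + y * I) := by
    linear_combination -hrect
  rw [e1]
  refine (norm_sub_le _ _).trans ?_
  refine (add_le_add_left (norm_add_le _ _) _).trans ?_
  rw [norm_smul, norm_smul, Complex.norm_I, one_mul, one_mul]
  rw [abs_of_pos (by linarith)] at b1 b2 b3
  have : C * (R ^ 2)⁻¹ * (R - -R) + C * (R ^ 2)⁻¹ * (0 - -R) + C * (R ^ 2)⁻¹ * (0 - -R)
      = 4 * C * R⁻¹ := by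
    field_simp
    ring
  linarith

lemma pol_factor_bound (a z : ℂ) (ha : 0 < a.im) (hz : z.im ≤ 0) :
    ‖(z - a)⁻¹‖ ≤ (1 + (‖a‖ + 1) / a.im) * (1 + ‖z‖)⁻¹ := by
  have h1 : a.im ≤ ‖z - a‖ := by
    refine le_trans ?_ (Complex.abs_im_le_norm _)
    rw [Complex.sub_im]
    rw [abs_of_nonpos] <;> linarith
  have h2 : ‖z‖ ≤ ‖z - a‖ + ‖a‖ := by simpa using norm_add_le (z - a) a
  have h3 : ‖a‖ + 1 ≤ (‖a‖ + 1) / a.im * ‖z - a‖ := by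
    rw [div_mul_eq_mul_div, le_div_iff₀ ha]
    gcongr
  have hp : 0 < ‖z - a‖ := by linarith
  rw [norm_inv, ← div_eq_mul_inv, le_div_iff₀ (by positivity), inv_mul_le_iff₀ hp]
  linarith

lemma pol_upper (n : ℕ) (hn : 2 ≤ n) (c : Fin n → ℝ) (θ : Fin n → ℂ)
    (hθ : ∀ i, 0 < (θ i).im) :
    Integrable (fun e : ℝ => ∏ i : Fin n, ((e : ℂ) + (c i : ℂ) - θ i)⁻¹) ∧
    ∫ e : ℝ, ∏ i : Fin n, ((e : ℂ) + (c i : ℂ) - θ i)⁻¹ = 0 := by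
  have ha : ∀ i, 0 < (θ i - c i).im := by intro i; simpa using hθ i
  have hCi : ∀ i, 0 ≤ 1 + (‖θ i - c i‖ + 1) / (θ i - c i).im := by
    intro i
    have := ha i
    positivity
  refine pol_integral_zero (fun z => ∏ i : Fin n, (z + (c i : ℂ) - θ i)⁻¹)
    (∏ i, (1 + (‖θ i - c i‖ + 1) / (θ i - c i).im)) (Finset.prod_nonneg fun i _ => hCi i) ?_ ?_
  · intro z hz
    refine DifferentiableAt.fun_finsetProd fun i _ => ?_
    refine DifferentiableAt.inv (by fun_prop) ?_
    intro h
    have := congrArg Complex.im h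
    simp at this
    linarith [hθ i]
  · intro z hz
    rw [norm_prod]
    refine (Finset.prod_le_prod (fun i _ => norm_nonneg _) (fun i _ => ?_)).trans
      (b := ∏ i, ((1 + (‖θ i - c i‖ + 1) / (θ i - c i).im) * (1 + ‖z‖)⁻¹)) ?_
    · rw [show z + (c i : ℂ) - θ i = z - (θ i - c i) by ring]
      exact pol_factor_bound _ _ (ha i) hz
    · rw [Finset.prod_mul_distrib]
      refine mul_le_mul_of_nonneg_left ?_ (Finset.prod_nonneg fun i _ => hCi i)
      simp only [Finset.prod_const, Finset.card_univ, Fintype.card_fin, inv_pow]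
      have hz0 := norm_nonneg z
      have : (1 + ‖z‖) ^ 2 ≤ (1 + ‖z‖) ^ n := pow_le_pow_right₀ (by linarith) hn
      gcongr
      nlinarith

theorem polarizedOrientedLoop_integral_eq_zero (n : ℕ) (hn : 2 ≤ n)
    (c : Fin n → ℝ) (θ : Fin n → ℂ)
    (hθ : (∀ i, 0 < (θ i).im) ∨ (∀ i, (θ i).im < 0)) :
    Integrable (fun e : ℝ => ∏ i : Fin n, ((e : ℂ) + (c i : ℂ) - θ i)⁻¹) ∧
    ∫ e : ℝ, ∏ i : Fin n, ((e : ℂ) + (c i : ℂ) - θ i)⁻¹ = 0 := by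
  rcases hθ with h | h
  · exact pol_upper n hn c θ h
  · obtain ⟨h1, h2⟩ := pol_upper n hn c (fun i => (starRingEnd ℂ) (θ i)) (by
      intro i; simpa using h i)
    have e : (fun e : ℝ => ∏ i : Fin n, ((e : ℂ) + (c i : ℂ) - θ i)⁻¹) =
        fun e : ℝ => (starRingEnd ℂ) (∏ i : Fin n, ((e : ℂ) + (c i : ℂ) - (starRingEnd ℂ) (θ i))⁻¹) := by
      funext e
      simp [map_prod]
    rw [e]
    refine ⟨(Complex.conjCLE : ℂ →L[ℝ] ℂ).integrable_comp h1, ?_⟩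
    rw [integral_conj, h2, map_zero]
end

section
/- Let n ≥ 2 be a natural number, c : Fin n → ℝ, ε : Fin n → ℝ with ε i = 1 or ε i = −1 for each i, and θ : Fin n → ℂ. Assume that either ε i · Im(θ i) > 0 for all i, or ε i · Im(θ i) < 0 for all i. Then the function e ↦ ∏_{i} 1/(ε i · e + c i − θ i) is (Bochner) integrable on ℝ and ∫_{ℝ} ∏_{i} 1/(ε i · e + c i − θ i) de = 0. -/
open MeasureTheory Complex

lemma halfPlane_aux (f : ℂ → ℂ) (K : ℝ) (hd : DifferentiableOn ℂ f {z | 0 ≤ z.im})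
    (hb : ∀ z : ℂ, 0 ≤ z.im → ‖f z‖ ≤ K / (1 + ‖z‖) ^ 2) :
    Integrable (fun e : ℝ => f e) ∧ ∫ e : ℝ, f e = 0 := by
  have hK : 0 ≤ K := by
    have h := (norm_nonneg _).trans (hb 0 (by simp))
    simpa using h
  have hc : Continuous (fun e : ℝ => f e) :=
    hd.continuousOn.comp_continuous continuous_ofReal (by intro x; simp)
  have hi : Integrable (fun e : ℝ => f e) := by
    refine (integrable_inv_one_add_sq.const_mul K).mono' hc.aestronglyMeasurable ?_
    refine Filter.Eventually.of_forall fun x => (hb x (by simp)).trans ?_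
    rw [div_eq_mul_inv]
    gcongr
    rw [norm_real, Real.norm_eq_abs]
    nlinarith [abs_nonneg x, sq_abs x]
  refine ⟨hi, ?_⟩
  have hbR : ∀ R : ℝ, 0 < R → ∀ z : ℂ, 0 ≤ z.im → R ≤ ‖z‖ → ‖f z‖ ≤ K / R ^ 2 := by
    intro R hR z hz hRz
    refine (hb z hz).trans ?_
    gcongr
    linarith
  have key : ∀ R : ℝ, 0 < R → ‖∫ x in (-R)..R, f x‖ ≤ 4 * K / R := by
    intro R hR
    have h := integral_boundary_rect_eq_zero_of_differentiableOn f ⟨-R, 0⟩ ⟨R, R⟩ (by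
      refine hd.mono ?_
      rintro z ⟨-, hz⟩
      simp only [Set.mem_preimage] at hz
      rw [Set.uIcc_of_le hR.le] at hz
      exact hz.1)
    simp only [ofReal_zero, zero_mul, add_zero] at h
    have h1 : ‖∫ x in (-R)..R, f (x + R * I)‖ ≤ K / R ^ 2 * |R - -R| := by
      refine intervalIntegral.norm_integral_le_of_norm_le_const fun x _ => ?_
      refine hbR R hR _ (by simp [hR.le]) ?_
      have := abs_im_le_norm ((x : ℂ) + R * I)
      simp at this
      exact (le_abs_self R).trans this
    have h2 : ∀ a : ℝ, |a| = R →
        ‖I • ∫ y in (0 : ℝ)..R, f (a + y * I)‖ ≤ K / R ^ 2 * |R - 0| := by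
      intro a ha
      rw [norm_smul, norm_I, one_mul]
      refine intervalIntegral.norm_integral_le_of_norm_le_const fun y hy => ?_
      rw [Set.uIoc_of_le hR.le] at hy
      refine hbR R hR _ (by simp [hy.1.le]) ?_
      have := abs_re_le_norm ((a : ℂ) + y * I)
      simp at this
      rwa [ha] at this
    have h3 := h2 R (abs_of_pos hR)
    have h4 := h2 (-R) (by rw [abs_neg, abs_of_pos hR])
    have e : ∫ x in (-R)..R, f x = (∫ x in (-R)..R, f (x + R * I))
        - (I • ∫ y in (0 : ℝ)..R, f (R + y * I))
        + (I • ∫ y in (0 : ℝ)..R, f ((-R : ℝ) + y * I)) := by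
      linear_combination h
    rw [e]
    refine (norm_add_le _ _).trans ?_
    have h5 := norm_sub_le (∫ x in (-R)..R, f (x + R * I))
      (I • ∫ y in (0 : ℝ)..R, f (R + y * I))
    rw [abs_of_pos (by linarith)] at h1 h3 h4
    have e2 : 4 * K / R = K / R ^ 2 * (R - -R) + K / R ^ 2 * (R - 0) + K / R ^ 2 * (R - 0) := by
      field_simp
      ring
    rw [e2]
    linarith
  have t1 := intervalIntegral_tendsto_integral hi Filter.tendsto_neg_atTop_atBot
    (Filter.tendsto_id (α := ℝ) (x := Filter.atTop))
  refine tendsto_nhds_unique t1 ?_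
  refine squeeze_zero_norm' ?_ (Filter.Tendsto.const_div_atTop Filter.tendsto_id (4 * K))
  filter_upwards [Filter.eventually_gt_atTop 0] with R hR
  exact key R hR

lemma polarized_neg_aux (n : ℕ) (hn : 2 ≤ n)
    (c : Fin n → ℝ) (ε : Fin n → ℝ) (hε : ∀ i, ε i = 1 ∨ ε i = -1)
    (θ : Fin n → ℂ) (hθ : ∀ i, ε i * (θ i).im < 0) :
    Integrable (fun e : ℝ => ∏ i : Fin n, ((ε i : ℂ) * (e : ℂ) + (c i : ℂ) - θ i)⁻¹) ∧
    ∫ e : ℝ, ∏ i : Fin n, ((ε i : ℂ) * (e : ℂ) + (c i : ℂ) - θ i)⁻¹ = 0 := by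
  have hlow : ∀ i, ∀ z : ℂ, 0 ≤ z.im →
      -(ε i * (θ i).im) ≤ ‖(ε i : ℂ) * z + (c i : ℂ) - θ i‖ := by
    intro i z hz
    refine le_trans ?_ (abs_im_le_norm _)
    have := hθ i
    rcases hε i with h | h <;> simp [h] at this ⊢
    · exact le_trans (by linarith) (le_abs_self _)
    · exact le_trans (by linarith) (neg_le_abs _)
  have hne : ∀ i, ∀ z : ℂ, 0 ≤ z.im → (ε i : ℂ) * z + (c i : ℂ) - θ i ≠ 0 := by
    intro i z hz
    rw [← norm_pos_iff]
    linarith [hlow i z hz, hθ i]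
  refine halfPlane_aux (fun z => ∏ i : Fin n, ((ε i : ℂ) * z + (c i : ℂ) - θ i)⁻¹)
    (∏ i, (1 + (1 + ‖(c i : ℂ) - θ i‖) / (-(ε i * (θ i).im)))) ?_ ?_
  · refine DifferentiableOn.fun_finsetProd fun i _ => ?_
    refine DifferentiableOn.inv (by fun_prop) fun z hz => hne i z hz
  · intro z hz
    have hC : ∀ i, 0 ≤ 1 + (1 + ‖(c i : ℂ) - θ i‖) / (-(ε i * (θ i).im)) := by
      intro i
      have : 0 < -(ε i * (θ i).im) := by linarith [hθ i]
      positivity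
    have hz1 : 0 < 1 + ‖z‖ := by positivity
    rw [norm_prod]
    calc ∏ i, ‖((ε i : ℂ) * z + (c i : ℂ) - θ i)⁻¹‖
        ≤ ∏ i, ((1 + (1 + ‖(c i : ℂ) - θ i‖) / (-(ε i * (θ i).im))) / (1 + ‖z‖)) := by
          refine Finset.prod_le_prod (fun i _ => norm_nonneg _) fun i _ => ?_
          have hg := norm_pos_iff.2 (hne i z hz)
          have hbp : 0 < -(ε i * (θ i).im) := by linarith [hθ i]
          have hl := hlow i z hz
          have hzn : ‖z‖ ≤ ‖(ε i : ℂ) * z + (c i : ℂ) - θ i‖ + ‖(c i : ℂ) - θ i‖ := by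
            have e : ‖z‖ = ‖((ε i : ℂ) * z + (c i : ℂ) - θ i) - ((c i : ℂ) - θ i)‖ := by
              have : ((ε i : ℂ) * z + (c i : ℂ) - θ i) - ((c i : ℂ) - θ i) = ε i * z := by ring
              rw [this]
              rcases hε i with h | h <;> simp [h]
            rw [e]
            exact norm_sub_le _ _
          rw [norm_inv, inv_eq_one_div, div_le_div_iff₀ hg hz1]
          set b := -(ε i * (θ i).im)
          set g := ‖(ε i : ℂ) * z + (c i : ℂ) - θ i‖
          set p := ‖(c i : ℂ) - θ i‖
          have hp : 0 ≤ p := norm_nonneg _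
          have : 1 + p ≤ (1 + p) / b * g := by
            rw [div_mul_eq_mul_div, le_div_iff₀ hbp]
            gcongr
          linarith
      _ = (∏ i, (1 + (1 + ‖(c i : ℂ) - θ i‖) / (-(ε i * (θ i).im)))) / (1 + ‖z‖) ^ n := by
          rw [Finset.prod_div_distrib]
          simp
      _ ≤ _ := by
          have := Finset.prod_nonneg (s := Finset.univ) fun i _ => hC i
          gcongr
          linarith [norm_nonneg z]

theorem polarizedLoop_integral_eq_zero (n : ℕ) (hn : 2 ≤ n)
    (c : Fin n → ℝ) (ε : Fin n → ℝ) (hε : ∀ i, ε i = 1 ∨ ε i = -1)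
    (θ : Fin n → ℂ)
    (hθ : (∀ i, 0 < ε i * (θ i).im) ∨ (∀ i, ε i * (θ i).im < 0)) :
    Integrable (fun e : ℝ => ∏ i : Fin n, ((ε i : ℂ) * (e : ℂ) + (c i : ℂ) - θ i)⁻¹) ∧
    ∫ e : ℝ, ∏ i : Fin n, ((ε i : ℂ) * (e : ℂ) + (c i : ℂ) - θ i)⁻¹ = 0 := by
  rcases hθ with h | h
  · obtain ⟨h1, h2⟩ := polarized_neg_aux n hn c (fun i => -ε i)
      (fun i => by rcases hε i with h | h <;> simp [h]) θ (fun i => by linarith [h i])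
    constructor
    · simpa using h1.comp_neg
    · rw [← integral_neg_eq_self] at h2
      simpa using h2
  · exact polarized_neg_aux n hn c ε hε θ h
end

section
/- Let n₊, n₋ ≥ 1 be natural numbers with n₊ + n₋ ≥ 2, and let θ⁺, θ⁻ ∈ ℂ with Im(θ⁺) > 0 and Im(θ⁻) < 0. Then the function e ↦ 1/((e − θ⁺)^{n₊} (e − θ⁻)^{n₋}) is (Bochner) integrable on ℝ and (1/(2π)) ∫_{ℝ} de/((e − θ⁺)^{n₊} (e − θ⁻)^{n₋}) = C(n₊ + n₋ − 2, n₊ − 1) · i · (−1)^{n₊+1} / (θ⁺ − θ⁻)^{n₊ + n₋ − 1}, where C(·,·) denotes the binomial coefficient. -/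
open MeasureTheory Complex Real

lemma aux_ne (θ : ℂ) (h : θ.im ≠ 0) (e : ℝ) : (e : ℂ) - θ ≠ 0 := by
  intro h0
  have := congrArg Complex.im h0
  simp at this
  exact h this

lemma aux_bound (θ : ℂ) (h : θ.im ≠ 0) :
    ∃ K : ℝ, 0 < K ∧ ∀ e : ℝ, ‖((e : ℂ) - θ)⁻¹‖ ≤ K * (√(1 + e ^ 2))⁻¹ := by
  have hy : 0 < θ.im ^ 2 := by positivity
  set L : ℝ := 2 + (1 + 2 * θ.re ^ 2) / θ.im ^ 2 with hL
  have hLpos : 0 < L := by positivity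
  refine ⟨√L, by positivity, fun e => ?_⟩
  have h1 : 1 + e ^ 2 ≤ L * ‖(e : ℂ) - θ‖ ^ 2 := by
    rw [Complex.sq_norm, Complex.normSq_apply]
    simp only [sub_re, ofReal_re, sub_im, ofReal_im, zero_sub]
    have h2 : L * ((e - θ.re) * (e - θ.re) + -θ.im * -θ.im) =
      2 * (e - θ.re) ^ 2 + 2 * θ.im ^ 2 + (1 + 2 * θ.re ^ 2)
        + (1 + 2 * θ.re ^ 2) / θ.im ^ 2 * (e - θ.re) ^ 2 := by
      rw [hL]; field_simp; ring
    rw [h2]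
    have h3 : 0 ≤ (1 + 2 * θ.re ^ 2) / θ.im ^ 2 * (e - θ.re) ^ 2 := by positivity
    nlinarith [sq_nonneg (e - 2 * θ.re)]
  have h4 : √(1 + e ^ 2) ≤ √L * ‖(e : ℂ) - θ‖ := by
    calc √(1 + e ^ 2) ≤ √(L * ‖(e : ℂ) - θ‖ ^ 2) := Real.sqrt_le_sqrt h1
      _ = _ := by rw [Real.sqrt_mul hLpos.le, Real.sqrt_sq (norm_nonneg _)]
  have hn : 0 < ‖(e : ℂ) - θ‖ := norm_pos_iff.mpr (aux_ne θ h e)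
  have hs : 0 < √(1 + e ^ 2) := by positivity
  rw [norm_inv, ← div_eq_mul_inv, le_div_iff₀ hs, inv_mul_le_iff₀ hn]
  linarith

lemma aux_integrable (p m : ℕ) (hpm : 2 ≤ p + m) (a b : ℂ) (ha : a.im ≠ 0) (hb : b.im ≠ 0) :
    Integrable (fun e : ℝ => (((e : ℂ) - a) ^ p * ((e : ℂ) - b) ^ m)⁻¹) := by
  obtain ⟨K, hK, hKb⟩ := aux_bound a ha
  obtain ⟨L, hL, hLb⟩ := aux_bound b hb
  refine Integrable.mono' (integrable_inv_one_add_sq.const_mul (K ^ p * L ^ m)) ?_ ?_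
  · refine Continuous.aestronglyMeasurable ?_
    refine Continuous.inv₀ (by fun_prop) fun e => ?_
    exact mul_ne_zero (pow_ne_zero _ (aux_ne a ha e)) (pow_ne_zero _ (aux_ne b hb e))
  · refine Filter.Eventually.of_forall fun e => ?_
    have hs : 1 ≤ √(1 + e ^ 2) := by
      rw [Real.one_le_sqrt]; nlinarith [sq_nonneg e]
    have hs2 : √(1 + e ^ 2) ^ 2 = 1 + e ^ 2 := Real.sq_sqrt (by positivity)
    calc ‖(((e : ℂ) - a) ^ p * ((e : ℂ) - b) ^ m)⁻¹‖
        = ‖((e : ℂ) - a)⁻¹‖ ^ p * ‖((e : ℂ) - b)⁻¹‖ ^ m := by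
          simp only [norm_inv, norm_mul, norm_pow, mul_inv, inv_pow]
      _ ≤ (K * (√(1 + e ^ 2))⁻¹) ^ p * (L * (√(1 + e ^ 2))⁻¹) ^ m := by
          gcongr
          · exact hKb e
          · exact hLb e
      _ = K ^ p * L ^ m * (√(1 + e ^ 2) ^ (p + m))⁻¹ := by
          rw [mul_pow, mul_pow, inv_pow, inv_pow, pow_add, mul_inv]; ring
      _ ≤ K ^ p * L ^ m * (1 + e ^ 2)⁻¹ := by
          have hle : 1 + e ^ 2 ≤ √(1 + e ^ 2) ^ (p + m) :=
            hs2.symm.le.trans (pow_le_pow_right₀ hs hpm)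
          gcongr

lemma aux_tendsto_inv (a : ℂ) (ha : a.im ≠ 0) (l : Filter ℝ)
    (hl : Filter.Tendsto (fun e : ℝ => |e|) l Filter.atTop) :
    Filter.Tendsto (fun e : ℝ => ((e : ℂ) - a)⁻¹) l (nhds 0) := by
  obtain ⟨K, hK, hKb⟩ := aux_bound a ha
  have h0 : Filter.Tendsto (fun e : ℝ => K * |e|⁻¹) l (nhds 0) := by
    simpa using (hl.inv_tendsto_atTop).const_mul K
  refine squeeze_zero_norm' ?_ h0
  filter_upwards [hl.eventually_gt_atTop 0] with e he
  refine (hKb e).trans ?_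
  gcongr
  apply Real.le_sqrt_of_sq_le
  rw [sq_abs]; linarith

lemma aux_pow (p : ℕ) (a : ℂ) (ha : a.im ≠ 0) :
    ∫ e : ℝ, (((e : ℂ) - a) ^ (p + 2))⁻¹ = 0 := by
  have hd : ∀ e : ℝ, HasDerivAt (fun e : ℝ => -((p : ℂ) + 1)⁻¹ * (((e : ℂ) - a)⁻¹) ^ (p + 1))
      ((((e : ℂ) - a) ^ (p + 2))⁻¹) e := by
    intro e
    have h1 : HasDerivAt (fun e : ℝ => (e : ℂ) - a) 1 e :=
      (Complex.ofRealCLM.hasDerivAt (x := e)).sub_const a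
    have hne := aux_ne a ha e
    have h2 := ((h1.inv hne).pow (p + 1)).const_mul (-((p : ℂ) + 1)⁻¹)
    refine h2.congr_deriv ?_
    have : (p : ℂ) + 1 ≠ 0 := by exact_mod_cast Nat.succ_ne_zero p
    simp
    field_simp
    ring
  have hi := aux_integrable (p + 2) 0 (by omega) a a ha ha
  simp only [pow_zero, mul_one] at hi
  have ht : ∀ l : Filter ℝ, Filter.Tendsto (fun e : ℝ => |e|) l Filter.atTop →
      Filter.Tendsto (fun e : ℝ => -((p : ℂ) + 1)⁻¹ * (((e : ℂ) - a)⁻¹) ^ (p + 1)) l (nhds 0) := by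
    intro l hl
    simpa using ((aux_tendsto_inv a ha l hl).pow (p + 1)).const_mul (-((p : ℂ) + 1)⁻¹)
  rw [integral_of_hasDerivAt_of_tendsto hd hi (ht _ Filter.tendsto_abs_atBot_atTop)
    (ht _ Filter.tendsto_abs_atTop_atTop), sub_zero]

lemma aux_top (a : ℂ) : Filter.Tendsto (fun e : ℝ => Complex.log ((e : ℂ) - a) - (Real.log e : ℂ))
    Filter.atTop (nhds 0) := by
  have h1 : Filter.Tendsto (fun e : ℝ => 1 - ((e⁻¹ : ℝ) : ℂ) * a) Filter.atTop (nhds 1) := by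
    have := (Complex.continuous_ofReal.tendsto 0).comp tendsto_inv_atTop_zero
    simpa using (this.mul_const a).const_sub 1
  have h2 := (continuousAt_clog (x := 1) (by simp)).tendsto.comp h1
  rw [Complex.log_one] at h2
  refine h2.congr' ?_
  filter_upwards [Filter.eventually_gt_atTop 0, h1.eventually_ne one_ne_zero] with e he hne
  have he' : (e : ℂ) ≠ 0 := by exact_mod_cast he.ne'
  have : (e : ℂ) - a = (e : ℂ) * (1 - ((e⁻¹ : ℝ) : ℂ) * a) := by
    push_cast; field_simp
  rw [this, Complex.log_ofReal_mul he hne]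
  simp

lemma aux_bot_tendsto (a : ℂ) :
    Filter.Tendsto (fun e : ℝ => -1 + ((e⁻¹ : ℝ) : ℂ) * a) Filter.atBot (nhds (-1)) := by
  have := (Complex.continuous_ofReal.tendsto 0).comp tendsto_inv_atBot_zero
  simpa using (this.mul_const a).const_add (-1)

lemma aux_bot_eq (a : ℂ) :
    (fun e : ℝ => Complex.log (-1 + ((e⁻¹ : ℝ) : ℂ) * a)) =ᶠ[Filter.atBot]
     (fun e : ℝ => Complex.log ((e : ℂ) - a) - (Real.log e : ℂ)) := by
  filter_upwards [Filter.eventually_lt_atBot 0,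
    (aux_bot_tendsto a).eventually_ne (neg_ne_zero.mpr one_ne_zero)] with e he hne
  have he' : (e : ℂ) ≠ 0 := by exact_mod_cast he.ne
  have : (e : ℂ) - a = ((-e : ℝ) : ℂ) * (-1 + ((e⁻¹ : ℝ) : ℂ) * a) := by
    push_cast; field_simp; ring
  rw [this, Complex.log_ofReal_mul (neg_pos.mpr he) hne]
  simp

lemma aux_bot_p (a : ℂ) (ha : 0 < a.im) :
    Filter.Tendsto (fun e : ℝ => Complex.log ((e : ℂ) - a) - (Real.log e : ℂ))
    Filter.atBot (nhds (-(π * I))) := by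
  have h := Complex.tendsto_log_nhdsWithin_im_neg_of_re_neg_of_im_zero (z := -1)
    (by simp) (by simp)
  have h2 := h.comp (tendsto_nhdsWithin_iff.mpr ⟨aux_bot_tendsto a, by
    filter_upwards [Filter.eventually_lt_atBot 0] with e he
    have : e⁻¹ < 0 := inv_lt_zero.mpr he
    simp only [Set.mem_ofPred_eq, add_im, neg_im, one_im, im_ofReal_mul]
    nlinarith⟩)
  simp only [norm_neg, norm_one, Real.log_one, ofReal_zero, zero_sub] at h2
  exact h2.congr' (aux_bot_eq a)

lemma aux_bot_m (a : ℂ) (ha : a.im < 0) :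
    Filter.Tendsto (fun e : ℝ => Complex.log ((e : ℂ) - a) - (Real.log e : ℂ))
    Filter.atBot (nhds (π * I)) := by
  have h := Complex.tendsto_log_nhdsWithin_im_nonneg_of_re_neg_of_im_zero (z := -1)
    (by simp) (by simp)
  have h2 := h.comp (tendsto_nhdsWithin_iff.mpr ⟨aux_bot_tendsto a, by
    filter_upwards [Filter.eventually_lt_atBot 0] with e he
    have : e⁻¹ < 0 := inv_lt_zero.mpr he
    simp only [Set.mem_ofPred_eq, add_im, neg_im, one_im, im_ofReal_mul]
    nlinarith⟩)
  simp only [norm_neg, norm_one, Real.log_one, ofReal_zero, zero_add] at h2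
  exact h2.congr' (aux_bot_eq a)

lemma aux_one (a b : ℂ) (ha : 0 < a.im) (hb : b.im < 0) :
    (a - b) * ∫ e : ℝ, (((e : ℂ) - a) ^ 1 * ((e : ℂ) - b) ^ 1)⁻¹ = 2 * π * I := by
  have hlog : ∀ c : ℂ, c.im ≠ 0 → ∀ e : ℝ,
      HasDerivAt (fun e : ℝ => Complex.log ((e : ℂ) - c)) (((e : ℂ) - c)⁻¹) e := by
    intro c hc e
    have h1 : HasDerivAt (fun e : ℝ => (e : ℂ) - c) 1 e :=
      (Complex.ofRealCLM.hasDerivAt (x := e)).sub_const c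
    have := h1.clog_real (by right; simpa using hc)
    simpa using this
  have hd : ∀ e : ℝ, HasDerivAt
      (fun e : ℝ => Complex.log ((e : ℂ) - a) - Complex.log ((e : ℂ) - b))
      ((a - b) * (((e : ℂ) - a) ^ 1 * ((e : ℂ) - b) ^ 1)⁻¹) e := by
    intro e
    refine ((hlog a ha.ne' e).sub (hlog b hb.ne e)).congr_deriv ?_
    have h1 := aux_ne a ha.ne' e
    have h2 := aux_ne b hb.ne e
    field_simp
    ring
  have hi := (aux_integrable 1 1 (by omega) a b ha.ne' hb.ne).const_mul (a - b)
  have htop := (aux_top a).sub (aux_top b)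
  have hbot := (aux_bot_p a ha).sub (aux_bot_m b hb)
  simp only [sub_sub_sub_cancel_right] at htop hbot
  rw [← integral_const_mul, integral_of_hasDerivAt_of_tendsto hd hi hbot htop]
  ring

lemma aux_rec (p m : ℕ) (hpm : 1 ≤ p + m) (a b : ℂ) (ha : a.im ≠ 0) (hb : b.im ≠ 0) :
    (a - b) * ∫ e : ℝ, (((e : ℂ) - a) ^ (p + 1) * ((e : ℂ) - b) ^ (m + 1))⁻¹ =
      (∫ e : ℝ, (((e : ℂ) - a) ^ (p + 1) * ((e : ℂ) - b) ^ m)⁻¹) -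
      ∫ e : ℝ, (((e : ℂ) - a) ^ p * ((e : ℂ) - b) ^ (m + 1))⁻¹ := by
  rw [← integral_const_mul, ← integral_sub (aux_integrable _ _ (by omega) a b ha hb)
    (aux_integrable _ _ (by omega) a b ha hb)]
  congr 1
  ext e
  have h1 := aux_ne a ha e
  have h2 := aux_ne b hb e
  field_simp
  ring

lemma aux_main (a b : ℂ) (ha : 0 < a.im) (hb : b.im < 0) (n : ℕ) : ∀ p m : ℕ, p + m = n →
    (a - b) ^ (p + m + 1) * ∫ e : ℝ, (((e : ℂ) - a) ^ (p + 1) * ((e : ℂ) - b) ^ (m + 1))⁻¹ =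
      2 * π * I * (-1) ^ p * (Nat.choose (p + m) p : ℂ) := by
  induction n with
  | zero =>
    intro p m h
    obtain ⟨rfl, rfl⟩ : p = 0 ∧ m = 0 := by omega
    simpa using aux_one a b ha hb
  | succ n ih =>
    intro p m h
    rw [pow_succ, mul_assoc, aux_rec p m (by omega) a b ha.ne' hb.ne, mul_sub]
    rcases p with _ | p
    · obtain rfl : m = n + 1 := by omega
      have h1 := ih 0 n (by omega)
      simp only [pow_zero, one_mul, aux_pow n b hb.ne]
      simp only [zero_add] at h1 ⊢
      rw [h1]; simp
    · rcases m with _ | m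
      · have h1 := ih p 0 (by omega)
        simp only [pow_zero, mul_one, aux_pow p a ha.ne']
        simp only [add_zero, zero_add] at h1 ⊢
        rw [h1]; simp [pow_succ]
      · have h1 := ih (p + 1) m (by omega)
        have h2 := ih p (m + 1) (by omega)
        have e1 : p + 1 + (m + 1) = p + 1 + m + 1 := by ring
        have e2 : p + 1 + (m + 1) = p + (m + 1) + 1 := by ring
        have hc : Nat.choose (p + 1 + (m + 1)) (p + 1)
            = Nat.choose (p + (m + 1)) p + Nat.choose (p + 1 + m) (p + 1) := by
          rw [e2, Nat.choose_succ_succ, show p + 1 + m = p + (m + 1) by ring]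
        rw [hc]
        nth_rewrite 1 [e1]
        rw [h1]
        rw [e2, h2]
        push_cast
        ring

theorem twoSidedPoles_integral_value (np nm : ℕ) (hnp : 1 ≤ np) (hnm : 1 ≤ nm)
    (hsum : 2 ≤ np + nm) (θp θm : ℂ) (hp : 0 < θp.im) (hm : θm.im < 0) :
    Integrable (fun e : ℝ => (((e : ℂ) - θp) ^ np * ((e : ℂ) - θm) ^ nm)⁻¹) ∧
    (1 / (2 * (π : ℂ))) * ∫ e : ℝ, (((e : ℂ) - θp) ^ np * ((e : ℂ) - θm) ^ nm)⁻¹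
      = (Nat.choose (np + nm - 2) (np - 1) : ℂ) * Complex.I * (-1) ^ (np + 1)
          / (θp - θm) ^ (np + nm - 1) := by
  refine ⟨aux_integrable np nm hsum θp θm hp.ne' hm.ne, ?_⟩
  obtain ⟨p, rfl⟩ : ∃ p, np = p + 1 := ⟨np - 1, by omega⟩
  obtain ⟨m, rfl⟩ : ∃ m, nm = m + 1 := ⟨nm - 1, by omega⟩
  have h := aux_main θp θm hp hm _ p m rfl
  have hd : θp - θm ≠ 0 := by
    intro h0
    have := congrArg Complex.im h0
    simp at this
    linarith
  have hpi : (π : ℂ) ≠ 0 := by exact_mod_cast Real.pi_ne_zero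
  rw [show p + 1 + (m + 1) - 2 = p + m by omega, show p + 1 + (m + 1) - 1 = p + m + 1 by omega,
    show p + 1 - 1 = p by omega, eq_div_iff (pow_ne_zero _ hd), mul_assoc,
    mul_comm (∫ e : ℝ, _), h]
  field_simp
  ring
end

section
/- Let ζ ∈ ℂ with Im(ζ) > 0 and let t ∈ ℝ with t ≠ 0. Then the symmetric improper integral lim_{R → ∞} ∫_{−R}^{R} e^{iEt}/(E − ζ) dE exists; it equals 2πi·e^{itζ} if t > 0, and it equals 0 if t < 0. -/
open Complex Filter Real intervalIntegral

lemma polar_jordan (G : ℂ → ℂ) (t C R₀ : ℝ) (ht : 0 < t) (hC : 0 ≤ C)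
    (hG : DifferentiableOn ℂ G {z | 0 ≤ z.im})
    (hb : ∀ z : ℂ, 0 ≤ z.im → R₀ ≤ ‖z‖ →
      ‖G z‖ ≤ C * (Real.exp (-(t * z.im)) / ‖z‖ + 1 / ‖z‖ ^ 2)) :
    Tendsto (fun R : ℝ => ∫ E in (-R)..R, G (E : ℂ)) atTop (nhds 0) := by
  have hlim : Tendsto (fun R : ℝ => C * (2 * Real.exp (-(t * R)) + 2 * R⁻¹)
      + 2 * (C * (t⁻¹ * R⁻¹ + R⁻¹))) atTop (nhds 0) := by
    have h1 : Tendsto (fun R : ℝ => Real.exp (-(t * R))) atTop (nhds 0) :=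
      Real.tendsto_exp_neg_atTop_nhds_zero.comp (tendsto_id.const_mul_atTop ht)
    have h2 : Tendsto (fun R : ℝ => R⁻¹) atTop (nhds 0) := tendsto_inv_atTop_zero
    have := (((h1.const_mul 2).add (h2.const_mul 2)).const_mul C).add
      ((((h2.const_mul t⁻¹).add h2).const_mul C).const_mul 2)
    simpa using this
  refine squeeze_zero_norm' ?_ hlim
  filter_upwards [eventually_ge_atTop R₀, eventually_gt_atTop 0] with R hR hR0
  have hb' : ∀ z : ℂ, 0 ≤ z.im → R ≤ ‖z‖ →
      ‖G z‖ ≤ C * (Real.exp (-(t * z.im)) * R⁻¹ + (R ^ 2)⁻¹) := by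
    intro z hz hz2
    refine (hb z hz (hR.trans hz2)).trans ?_
    rw [div_eq_mul_inv, one_div]
    gcongr
  have key := Complex.integral_boundary_rect_eq_zero_of_differentiableOn G (-R : ℂ) (R + R * I)
    (by
      apply hG.mono
      intro z hz
      have := hz.2
      simp [Set.uIcc_of_le hR0.le] at this
      exact this.1)
  simp at key
  have htop : ‖∫ x in (-R)..R, G (x + R * I)‖ ≤ C * (2 * Real.exp (-(t * R)) + 2 * R⁻¹) := by
    have := intervalIntegral.norm_integral_le_of_norm_le_const (a := -R) (b := R)
      (f := fun x : ℝ => G (x + R * I)) (C := C * (Real.exp (-(t * R)) * R⁻¹ + (R ^ 2)⁻¹)) (by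
        intro x _
        have h := hb' (x + R * I) (by simp [hR0.le]) (by
          have := Complex.abs_im_le_norm ((x : ℂ) + R * I)
          simp at this
          exact (le_abs_self R).trans this)
        simpa using h)
    refine this.trans (le_of_eq ?_)
    rw [abs_of_pos (by linarith)]
    field_simp
    ring
  have hside : ∀ s : ℂ, |s.re| = R → s.im = 0 →
      ‖∫ y in (0:ℝ)..R, G (s + y * I)‖ ≤ C * (t⁻¹ * R⁻¹ + R⁻¹) := by
    intro s hs hs2
    have := intervalIntegral.norm_integral_le_of_norm_le (μ := MeasureTheory.volume) (a := 0) (b := R) hR0.le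
      (f := fun y : ℝ => G (s + y * I))
      (g := fun y => C * (Real.exp (-(t * y)) * R⁻¹ + (R ^ 2)⁻¹)) (by
        refine Eventually.of_forall ?_
        intro y hy
        have h := hb' (s + y * I) (by simp [hs2, hy.1.le]) (by
          have := Complex.abs_re_le_norm (s + y * I)
          simp [hs] at this
          exact this)
        simpa [hs2] using h)
      (Continuous.intervalIntegrable (by fun_prop) _ _)
    refine this.trans ?_
    have hd : ∀ y ∈ Set.uIcc 0 R, HasDerivAt
        (fun y : ℝ => C * (-(t⁻¹) * Real.exp (-(t * y)) * R⁻¹ + (R ^ 2)⁻¹ * y))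
        (C * (Real.exp (-(t * y)) * R⁻¹ + (R ^ 2)⁻¹)) y := by
      intro y _
      have h1 : HasDerivAt (fun y : ℝ => -(t * y)) (-t) y := by
        simpa using (hasDerivAt_id y).const_mul (-t)
      have h2 := ((((h1.exp).const_mul (-(t⁻¹))).mul_const R⁻¹).add
        ((hasDerivAt_id y).const_mul (R ^ 2)⁻¹)).const_mul C
      refine HasDerivAt.congr_deriv h2 ?_
      field_simp
    rw [intervalIntegral.integral_eq_sub_of_hasDerivAt hd
      (Continuous.intervalIntegrable (by fun_prop) _ _), ← mul_sub]
    refine mul_le_mul_of_nonneg_left ?_ hC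
    have e1 : (R ^ 2)⁻¹ * R = R⁻¹ := by field_simp
    have e2 : 0 ≤ t⁻¹ * Real.exp (-(t * R)) * R⁻¹ := by positivity
    simp [e1]
    linarith
  have hr := hside R (by simp [abs_of_pos hR0]) (by simp)
  have hl := hside (-R) (by simp [abs_of_pos hR0]) (by simp)
  have e : ∫ E in (-R)..R, G (E : ℂ) = (∫ x in (-R)..R, G (x + R * I))
      - I * (∫ y in (0:ℝ)..R, G (R + y * I)) + I * (∫ y in (0:ℝ)..R, G (-R + y * I)) := by
    linear_combination key
  rw [e]
  refine (norm_add_le _ _).trans ?_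
  have := norm_sub_le (∫ x in (-R)..R, G (x + R * I)) (I * (∫ y in (0:ℝ)..R, G (R + y * I)))
  simp only [norm_mul, norm_I, one_mul] at this ⊢
  linarith

lemma polar_bound (ζ z : ℂ) (h : 2 * ‖ζ‖ + 1 ≤ ‖z‖) : ‖z - ζ‖⁻¹ ≤ 2 / ‖z‖ := by
  have h1 := norm_sub_norm_le z ζ
  have h0 := norm_nonneg ζ
  rw [inv_eq_one_div, div_le_div_iff₀ (by linarith) (by linarith)]
  linarith

lemma polar_exp_norm (t : ℝ) (z : ℂ) : ‖Complex.exp (I * z * t)‖ = Real.exp (-(t * z.im)) := by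
  rw [Complex.norm_exp]
  simp [mul_comm]

lemma polar_lorentz (x y : ℝ) (hy : 0 < y) :
    Tendsto (fun R : ℝ => ∫ E in (-R)..R, y / ((E - x) ^ 2 + y ^ 2)) atTop (nhds π) := by
  have hI : ∀ R : ℝ, ∫ E in (-R)..R, y / ((E - x) ^ 2 + y ^ 2)
      = Real.arctan ((R - x) / y) - Real.arctan ((-R - x) / y) := by
    intro R
    refine intervalIntegral.integral_eq_sub_of_hasDerivAt
      (f := fun E => Real.arctan ((E - x) / y)) ?_ ?_
    · intro E _
      have h := (((hasDerivAt_id E).sub_const x).div_const y).arctan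
      refine HasDerivAt.congr_deriv h ?_
      simp only [id]
      have : (E - x) ^ 2 + y ^ 2 ≠ 0 := by positivity
      field_simp
      ring
    · apply Continuous.intervalIntegrable
      refine continuous_const.div (by fun_prop) ?_
      intro E
      positivity
  simp only [hI]
  have h1 : Tendsto (fun R : ℝ => (R - x) / y) atTop atTop :=
    (tendsto_atTop_add_const_right _ (-x) tendsto_id).atTop_div_const hy
  have h2 : Tendsto (fun R : ℝ => (-R - x) / y) atTop atBot :=
    (tendsto_atBot_add_const_right _ (-x) tendsto_neg_atTop_atBot).atBot_div_const hy
  have h3 := ((Real.tendsto_arctan_atTop.mono_right nhdsWithin_le_nhds).comp h1).sub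
    ((Real.tendsto_arctan_atBot.mono_right nhdsWithin_le_nhds).comp h2)
  have e : π / 2 - -(π / 2) = π := by ring
  rw [e] at h3
  exact h3

lemma polar_pos (ζ : ℂ) (hζ : 0 < ζ.im) (t : ℝ) (ht : 0 < t) :
    Tendsto (fun R : ℝ => ∫ E in (-R)..R,
        Complex.exp (Complex.I * (E : ℂ) * (t : ℂ)) / ((E : ℂ) - ζ)) atTop
      (nhds (2 * (π : ℂ) * Complex.I * Complex.exp (Complex.I * (t : ℂ) * ζ))) := by
  set ζ' : ℂ := (starRingEnd ℂ) ζ with hζ'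
  set c : ℂ := Complex.exp (I * t * ζ) with hc
  set k : ℂ := c * (2 * I * ζ.im) with hk
  have him : ζ'.im = -ζ.im := by simp [hζ']
  have hne' : ∀ z : ℂ, 0 ≤ z.im → z - ζ' ≠ 0 := by
    intro z hz h
    have := congrArg Complex.im h
    simp [him] at this
    linarith
  have hsub : ζ - ζ' = 2 * I * ζ.im := by
    apply Complex.ext <;> simp [hζ']
    ring
  let f : ℂ → ℂ := fun z => Complex.exp (I * z * t) - k / (z - ζ')
  have hfζ : f ζ = 0 := by
    have h := hne' ζ hζ.le
    simp only [f, hk, ← hsub]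
    rw [mul_div_assoc, div_self h, hc, mul_one, sub_eq_zero]
    congr 1
    ring
  have hfd : DifferentiableOn ℂ f {z | 0 ≤ z.im} := by
    intro z hz
    apply DifferentiableAt.differentiableWithinAt
    have := hne' z hz
    fun_prop (disch := assumption)
  have hs : {z : ℂ | 0 ≤ z.im} ∈ nhds ζ :=
    Filter.mem_of_superset
      ((isOpen_lt continuous_const Complex.continuous_im).mem_nhds hζ)
      (fun z (hz : 0 < z.im) => hz.le)
  have hGd : DifferentiableOn ℂ (dslope f ζ) {z | 0 ≤ z.im} :=
    (Complex.differentiableOn_dslope hs).2 hfd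
  have hG : ∀ z, z ≠ ζ → dslope f ζ z = Complex.exp (I * z * t) / (z - ζ)
      - k / (z - ζ') / (z - ζ) := by
    intro z hz
    rw [dslope_of_ne _ hz, slope_def_field, hfζ]
    simp only [f]
    ring
  have hJ := polar_jordan (dslope f ζ) t (2 + 4 * ‖k‖) (2 * ‖ζ‖ + 1) ht (by positivity) hGd (by
    intro z hz hz2
    have hzp : 0 < ‖z‖ := by linarith [norm_nonneg ζ]
    have hzne : z ≠ ζ := by
      rintro rfl
      linarith [norm_nonneg z]
    have b1 := polar_bound ζ z hz2
    have b2 := polar_bound ζ' z (by simpa [hζ'] using hz2)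
    rw [hG z hzne]
    refine (norm_sub_le _ _).trans ?_
    rw [norm_div, norm_div, norm_div, polar_exp_norm, div_eq_mul_inv, div_eq_mul_inv,
      div_eq_mul_inv]
    calc _ ≤ Real.exp (-(t * z.im)) * (2 / ‖z‖) + ‖k‖ * (2 / ‖z‖) * (2 / ‖z‖) := by gcongr
      _ = 2 * (Real.exp (-(t * z.im)) / ‖z‖) + 4 * ‖k‖ * (1 / ‖z‖ ^ 2) := by
        field_simp
        ring
      _ ≤ _ := by
        have p1 : 0 ≤ ‖k‖ * (Real.exp (-(t * z.im)) / ‖z‖) := by positivity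
        have p2 : 0 ≤ 1 / ‖z‖ ^ 2 := by positivity
        nlinarith)
  have hL := ((Complex.continuous_ofReal.tendsto _).comp
    (polar_lorentz ζ.re ζ.im hζ)).const_mul (c * (2 * I))
  have hsum := hJ.add hL
  have hneR : ∀ E : ℝ, (E : ℂ) ≠ ζ := by
    intro E h
    have := congrArg Complex.im h
    simp at this
    linarith
  have hcontG : Continuous (fun E : ℝ => dslope f ζ (E : ℂ)) :=
    hGd.continuousOn.comp_continuous Complex.continuous_ofReal (fun E => by simp)
  have hcontL : Continuous (fun E : ℝ => ζ.im / ((E - ζ.re) ^ 2 + ζ.im ^ 2)) := by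
    refine continuous_const.div (by fun_prop) ?_
    intro E
    positivity
  have hlim : 0 + c * (2 * I) * ((π : ℝ) : ℂ) = 2 * (π : ℂ) * I * c := by ring
  rw [hlim] at hsum
  refine hsum.congr ?_
  intro R
  simp only [Function.comp]
  rw [← intervalIntegral.integral_ofReal, ← intervalIntegral.integral_const_mul,
    ← intervalIntegral.integral_add (hcontG.intervalIntegrable _ _)
      ((by fun_prop : Continuous _).intervalIntegrable _ _)]
  refine intervalIntegral.integral_congr ?_
  intro E _
  simp only
  rw [hG _ (hneR E)]
  have hprod : ((E : ℂ) - ζ') * ((E : ℂ) - ζ) = ((E : ℂ) - ζ.re) ^ 2 + (ζ.im : ℂ) ^ 2 := by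
    apply Complex.ext <;> simp [hζ', pow_two]
    ring
  rw [div_div, hprod, hk]
  push_cast
  ring

lemma polar_neg (ζ : ℂ) (hζ : 0 < ζ.im) (t : ℝ) (ht : t < 0) :
    Tendsto (fun R : ℝ => ∫ E in (-R)..R,
        Complex.exp (Complex.I * (E : ℂ) * (t : ℂ)) / ((E : ℂ) - ζ)) atTop (nhds 0) := by
  have hJ := polar_jordan (fun z => Complex.exp (I * z * ((-t : ℝ) : ℂ)) / (-z - ζ))
    (-t) 2 (2 * ‖ζ‖ + 1) (by linarith) (by norm_num) (by
      intro z hz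
      apply DifferentiableAt.differentiableWithinAt
      have : -z - ζ ≠ 0 := by
        intro h
        have h2 := congrArg Complex.im h
        simp at h2 hz
        linarith
      fun_prop (disch := assumption)) (by
    intro z hz hz2
    have hzp : 0 < ‖z‖ := by linarith [norm_nonneg ζ]
    have b1 := polar_bound ζ (-z) (by simpa using hz2)
    rw [norm_neg] at b1
    rw [norm_div, polar_exp_norm, div_eq_mul_inv]
    calc _ ≤ Real.exp (-(-t * z.im)) * (2 / ‖z‖) := by gcongr
      _ = 2 * (Real.exp (-(-t * z.im)) / ‖z‖) := by ring
      _ ≤ _ := by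
        have p2 : 0 ≤ 1 / ‖z‖ ^ 2 := by positivity
        linarith)
  refine hJ.congr ?_
  intro R
  have h := intervalIntegral.integral_comp_neg (a := -R) (b := R)
    (fun E : ℝ => Complex.exp (I * (E : ℂ) * (t : ℂ)) / ((E : ℂ) - ζ))
  rw [neg_neg] at h
  rw [← h]
  simp

theorem fourierTransform_polarNumber (ζ : ℂ) (hζ : 0 < ζ.im) (t : ℝ) (ht : t ≠ 0) :
    (0 < t → Tendsto (fun R : ℝ => ∫ E in (-R)..R,
        Complex.exp (Complex.I * (E : ℂ) * (t : ℂ)) / ((E : ℂ) - ζ)) atTop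
      (nhds (2 * (π : ℂ) * Complex.I * Complex.exp (Complex.I * (t : ℂ) * ζ)))) ∧
    (t < 0 → Tendsto (fun R : ℝ => ∫ E in (-R)..R,
        Complex.exp (Complex.I * (E : ℂ) * (t : ℂ)) / ((E : ℂ) - ζ)) atTop
      (nhds 0)) :=
  ⟨polar_pos ζ hζ t, polar_neg ζ hζ t⟩
end

section
/- Let a, b ∈ ℂ with a ≠ b. If Im(a) < 0 and Im(b) < 0, then lim_{R → ∞} ∫_{−R}^{R} E/((E − a)(E − b)) dE = −πi; if Im(a) > 0 and Im(b) > 0, then lim_{R → ∞} ∫_{−R}^{R} E/((E − a)(E − b)) dE = +πi. In both cases the limit of integrals over symmetric intervals [−R, R] exists. -/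
open Complex Filter Real intervalIntegral

lemma aux_tendsto (a c : ℂ) (h0 : ∀ E : ℝ, c * ((E : ℂ) - a) ∈ slitPlane)
    (hc : c ∈ slitPlane) (hc' : -c ∈ slitPlane) :
    Tendsto (fun R : ℝ => ∫ E in (-R)..R, ((E : ℂ) - a)⁻¹) atTop
      (nhds (Complex.log c - Complex.log (-c))) := by
  have hcne : c ≠ 0 := slitPlane_ne_zero hc
  have hne : ∀ E : ℝ, (E : ℂ) - a ≠ 0 := fun E h => by
    have := slitPlane_ne_zero (h0 E)
    simp [h] at this
  have hinv : Tendsto (fun R : ℝ => a * ((R : ℂ))⁻¹) atTop (nhds 0) := by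
    have h1 : Tendsto (fun R : ℝ => ((R⁻¹ : ℝ) : ℂ)) atTop (nhds ((0 : ℝ) : ℂ)) :=
      (Complex.continuous_ofReal.tendsto 0).comp tendsto_inv_atTop_zero
    simpa using h1.const_mul a
  have h1 : Tendsto (fun R : ℝ => Complex.log (c * (1 - a * ((R : ℂ))⁻¹))) atTop
      (nhds (Complex.log c)) := by
    have : Tendsto (fun R : ℝ => c * (1 - a * ((R : ℂ))⁻¹)) atTop (nhds c) := by
      simpa using (hinv.const_sub 1).const_mul c
    exact this.clog hc
  have h2 : Tendsto (fun R : ℝ => Complex.log (c * (-1 - a * ((R : ℂ))⁻¹))) atTop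
      (nhds (Complex.log (-c))) := by
    have : Tendsto (fun R : ℝ => c * (-1 - a * ((R : ℂ))⁻¹)) atTop (nhds (-c)) := by
      simpa using (hinv.const_sub (-1)).const_mul c
    exact this.clog hc'
  refine (h1.sub h2).congr' ?_
  filter_upwards [eventually_gt_atTop 0] with R hR
  have hRc : (R : ℂ) ≠ 0 := by exact_mod_cast hR.ne'
  have hF : ∫ E in (-R)..R, ((E : ℂ) - a)⁻¹ =
      Complex.log (c * ((R : ℂ) - a)) - Complex.log (c * (((-R : ℝ) : ℂ) - a)) := by
    refine integral_eq_sub_of_hasDerivAt (f := fun E : ℝ => Complex.log (c * ((E : ℂ) - a)))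
      (fun E _ => ?_) ?_
    · have hd : HasDerivAt (fun E : ℝ => c * ((E : ℂ) - a)) c E := by
        simpa using ((Complex.ofRealCLM.hasDerivAt (x := E)).sub_const a).const_mul c
      have := hd.clog_real (h0 E)
      have he : c / (c * ((E : ℂ) - a)) = ((E : ℂ) - a)⁻¹ := by
        have := hne E
        field_simp
      rwa [he] at this
    · apply Continuous.intervalIntegrable
      exact Continuous.inv₀ (by fun_prop) hne
  have e1 : c * ((R : ℂ) - a) = (R : ℂ) * (c * (1 - a * ((R : ℂ))⁻¹)) := by
    field_simp
  have e2 : c * (((-R : ℝ) : ℂ) - a) = (R : ℂ) * (c * (-1 - a * ((R : ℂ))⁻¹)) := by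
    push_cast; field_simp
  have n1 : c * (1 - a * ((R : ℂ))⁻¹) ≠ 0 := fun h => by
    have := slitPlane_ne_zero (h0 R); rw [e1, h] at this; simp at this
  have n2 : c * (-1 - a * ((R : ℂ))⁻¹) ≠ 0 := fun h => by
    have := slitPlane_ne_zero (h0 (-R)); rw [e2, h] at this; simp at this
  rw [hF, e1, e2, Complex.log_ofReal_mul hR n1, Complex.log_ofReal_mul hR n2]
  ring

lemma aux_combine (a b L : ℂ) (hab : a ≠ b)
    (ha : ∀ E : ℝ, (E : ℂ) - a ≠ 0) (hb : ∀ E : ℝ, (E : ℂ) - b ≠ 0)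
    (hA : Tendsto (fun R : ℝ => ∫ E in (-R)..R, ((E : ℂ) - a)⁻¹) atTop (nhds L))
    (hB : Tendsto (fun R : ℝ => ∫ E in (-R)..R, ((E : ℂ) - b)⁻¹) atTop (nhds L)) :
    Tendsto (fun R : ℝ => ∫ E in (-R)..R,
        (E : ℂ) / (((E : ℂ) - a) * ((E : ℂ) - b))) atTop (nhds L) := by
  have hab' : a - b ≠ 0 := sub_ne_zero.mpr hab
  have h := (hA.const_mul (a / (a - b))).sub (hB.const_mul (b / (a - b)))
  have hL : a / (a - b) * L - b / (a - b) * L = L := by field_simp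
  rw [hL] at h
  refine h.congr fun R => ?_
  rw [← intervalIntegral.integral_const_mul, ← intervalIntegral.integral_const_mul,
    ← intervalIntegral.integral_sub]
  · refine intervalIntegral.integral_congr fun E _ => ?_
    have h1 := ha E
    have h2 := hb E
    field_simp
    ring
  · exact (continuous_const.mul (Continuous.inv₀ (by fun_prop) ha)).intervalIntegrable _ _
  · exact (continuous_const.mul (Continuous.inv₀ (by fun_prop) hb)).intervalIntegrable _ _

lemma aux_ne_s11 (a : ℂ) (h : a.im ≠ 0) (E : ℝ) : (E : ℂ) - a ≠ 0 := fun h' => by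
  have := congrArg Complex.im h'
  simp at this
  exact h this

lemma aux_neg (a : ℂ) (h : a.im < 0) :
    Tendsto (fun R : ℝ => ∫ E in (-R)..R, ((E : ℂ) - a)⁻¹) atTop
      (nhds (-(π : ℂ) * Complex.I)) := by
  have := aux_tendsto a (-Complex.I) (fun E => Or.inl (by simpa using h))
    (Or.inr (by simp)) (Or.inr (by simp))
  convert this using 2
  rw [neg_neg, Complex.log_neg_I, Complex.log_I]
  ring

lemma aux_pos (a : ℂ) (h : 0 < a.im) :
    Tendsto (fun R : ℝ => ∫ E in (-R)..R, ((E : ℂ) - a)⁻¹) atTop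
      (nhds ((π : ℂ) * Complex.I)) := by
  have := aux_tendsto a Complex.I (fun E => Or.inl (by simpa using h))
    (Or.inr (by simp)) (Or.inr (by simp))
  convert this using 2
  rw [Complex.log_neg_I, Complex.log_I]
  ring

theorem contactTerm_integral (a b : ℂ) (hab : a ≠ b) :
    ((a.im < 0 ∧ b.im < 0) → Tendsto (fun R : ℝ => ∫ E in (-R)..R,
        (E : ℂ) / (((E : ℂ) - a) * ((E : ℂ) - b))) atTop
      (nhds (-(π : ℂ) * Complex.I))) ∧
    ((0 < a.im ∧ 0 < b.im) → Tendsto (fun R : ℝ => ∫ E in (-R)..R,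
        (E : ℂ) / (((E : ℂ) - a) * ((E : ℂ) - b))) atTop
      (nhds ((π : ℂ) * Complex.I))) := by
  constructor
  · rintro ⟨ha, hb⟩
    exact aux_combine a b _ hab (aux_ne_s11 a ha.ne) (aux_ne_s11 b hb.ne) (aux_neg a ha) (aux_neg b hb)
  · rintro ⟨ha, hb⟩
    exact aux_combine a b _ hab (aux_ne_s11 a ha.ne') (aux_ne_s11 b hb.ne') (aux_pos a ha) (aux_pos b hb)
end

section
/- Let V be a finite type and r : V → V → Prop a relation with no directed cycle (there is no v with Relation.TransGen r v v). Let a, b ∈ V with a ≠ b, and assume there is no directed path from a to b, i.e., ¬ Relation.ReflTransGen r a b. Then there exists t : V → ℝ such that t x < t y whenever r x y, and moreover t b < t a. -/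
theorem timeOrdering_separating {V : Type*} [Finite V] (r : V → V → Prop)
    (hacyclic : ¬ ∃ v, Relation.TransGen r v v)
    (a b : V) (hab : a ≠ b) (hpath : ¬ Relation.ReflTransGen r a b) :
    ∃ t : V → ℝ, (∀ x y, r x y → t x < t y) ∧ t b < t a := by
  classical
  let f : V → ℕ := fun x => Set.ncard {y | Relation.TransGen r y x} +
    (if Relation.ReflTransGen r a x then Nat.card V + 1 else 0)
  refine ⟨fun x => (f x : ℝ), ?_, ?_⟩
  · intro x y hxy
    have h1 : Set.ncard {z | Relation.TransGen r z x} <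
        Set.ncard {z | Relation.TransGen r z y} := by
      apply Set.ncard_lt_ncard _ (Set.toFinite _)
      refine ⟨fun z hz => Relation.TransGen.tail hz hxy, fun h => ?_⟩
      exact hacyclic ⟨x, h (Relation.TransGen.single hxy)⟩
    have h2 : f x < f y := by
      by_cases hx : Relation.ReflTransGen r a x
      · have hy := hx.tail hxy
        simp only [f, hx, hy, if_true]
        omega
      · simp only [f, hx, if_false]
        omega
    exact Nat.cast_lt.mpr h2
  · have h1 : Set.ncard {z | Relation.TransGen r z b} ≤ Nat.card V := Set.ncard_le_card _
    have h2 : f b < f a := by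
      have ha : Relation.ReflTransGen r a a := Relation.ReflTransGen.refl
      simp only [f, hpath, ha, if_true, if_false]
      omega
    exact Nat.cast_lt.mpr h2
end

section
/- Let ω₁, ω₂ ∈ ℂ with Im(ω₁) < 0 and Im(ω₂) < 0, and let p ∈ ℝ. For k ∈ ℝ define σ₁⁺(k) = (1/(2ω₁))·1/(k − ω₁), σ₁⁻(k) = −(1/(2ω₁))·1/(k + ω₁), σ₂⁺(k) = (1/(2ω₂))·1/(k − p − ω₂), σ₂⁻(k) = −(1/(2ω₂))·1/(k − p + ω₂), and τᵢ^±(k) = −conj(σᵢ^∓(k)) for i = 1, 2 (complex conjugation of the value). Set zᵢ = σᵢ⁺ + σᵢ⁻, wᵢ = τᵢ⁺ + τᵢ⁻, uᵢ = σᵢ⁺ + τᵢ⁻, vᵢ = σᵢ⁻ + τᵢ⁺ (pointwise in k). Then each of the four functions z₁z₂, w₁w₂, u₁v₂, v₁u₂ is (Bochner) integrable on ℝ and ∫_{ℝ} z₁(k)z₂(k) dk + ∫_{ℝ} w₁(k)w₂(k) dk = ∫_{ℝ} u₁(k)v₂(k) dk + ∫_{ℝ} v₁(k)u₂(k) dk.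 -/
open MeasureTheory Complex

set_option linter.unusedSimpArgs false

lemma bubble_ne (a : ℂ) (ha : a.im ≠ 0) (k : ℝ) : (k : ℂ) - a ≠ 0 := by
  intro h
  have := congrArg Complex.im h
  simp at this
  exact ha this

lemma bubble_cont (a : ℂ) (ha : a.im ≠ 0) : Continuous (fun k : ℝ => ((k : ℂ) - a)⁻¹) :=
  Continuous.inv₀ (by fun_prop) (bubble_ne a ha)

lemma bubble_sq (a : ℂ) (ha : a.im ≠ 0) : Integrable (fun k : ℝ => ‖((k : ℂ) - a)⁻¹‖ ^ 2) := by
  have h1 := (integrable_inv_one_add_sq.comp_div ha).comp_sub_right a.re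
  refine (h1.const_mul ((a.im ^ 2)⁻¹)).congr (Filter.Eventually.of_forall fun k => ?_)
  simp only [norm_inv, inv_pow, ← Complex.normSq_eq_norm_sq, Complex.normSq_apply]
  rw [← mul_inv]
  congr 1
  simp
  field_simp
  ring

lemma bubble_int (a b : ℂ) (ha : a.im ≠ 0) (hb : b.im ≠ 0) :
    Integrable (fun k : ℝ => ((k : ℂ) - a)⁻¹ * ((k : ℂ) - b)⁻¹) := by
  refine ((bubble_sq a ha).add (bubble_sq b hb)).mono'
    ((bubble_cont a ha).mul (bubble_cont b hb)).aestronglyMeasurable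
    (Filter.Eventually.of_forall fun k => ?_)
  simp only [norm_mul, Pi.add_apply]
  nlinarith [sq_nonneg (‖((k : ℂ) - a)⁻¹‖ - ‖((k : ℂ) - b)⁻¹‖), sq_nonneg (‖((k : ℂ) - a)⁻¹‖),
    sq_nonneg (‖((k : ℂ) - b)⁻¹‖)]

lemma bubble_inv_tendsto (b : ℂ) (l : Filter ℝ)
    (hl : Filter.Tendsto (fun k : ℝ => ‖k‖) l Filter.atTop) :
    Filter.Tendsto (fun k : ℝ => ((k : ℂ) - b)⁻¹) l (nhds 0) := by
  refine Filter.tendsto_inv₀_cobounded.comp ?_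
  rw [← tendsto_norm_atTop_iff_cobounded]
  refine Filter.tendsto_atTop_mono (fun k => ?_) (Filter.tendsto_atTop_add_const_right l (-‖b‖) hl)
  have := norm_sub_norm_le (k : ℂ) b
  rw [Complex.norm_real] at this
  linarith

lemma bubble_deriv (a : ℂ) (k : ℝ) : HasDerivAt (fun k : ℝ => (k : ℂ) - a) 1 k :=
  (Complex.ofRealCLM.hasDerivAt (x := k)).sub_const a

lemma bubble_zero (a b : ℂ) (hab : 0 < a.im * b.im) :
    ∫ k : ℝ, ((k : ℂ) - a)⁻¹ * ((k : ℂ) - b)⁻¹ = 0 := by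
  have ha : a.im ≠ 0 := by rintro h; simp [h] at hab
  have hb : b.im ≠ 0 := by rintro h; simp [h] at hab
  have hbot : Filter.Tendsto (fun k : ℝ => ‖k‖) Filter.atBot Filter.atTop :=
    Filter.tendsto_abs_atBot_atTop
  have htop : Filter.Tendsto (fun k : ℝ => ‖k‖) Filter.atTop Filter.atTop :=
    Filter.tendsto_abs_atTop_atTop
  by_cases h : a = b
  · subst h
    have key := integral_of_hasDerivAt_of_tendsto
      (f := fun k : ℝ => -((k : ℂ) - a)⁻¹) (f' := fun k : ℝ => ((k : ℂ) - a)⁻¹ * ((k : ℂ) - a)⁻¹)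
      (m := -0) (n := -0)
      (fun k => by
        have := ((bubble_deriv a k).fun_inv (bubble_ne a ha k)).fun_neg
        convert this using 1
        have := bubble_ne a ha k
        field_simp) (bubble_int a a ha ha)
      (bubble_inv_tendsto a _ hbot).neg (bubble_inv_tendsto a _ htop).neg
    simpa using key
  · have hsub : a - b ≠ 0 := sub_ne_zero.2 h
    have hlim : ∀ l : Filter ℝ, Filter.Tendsto (fun k : ℝ => ‖k‖) l Filter.atTop →
        Filter.Tendsto (fun k : ℝ => (a - b)⁻¹ * Complex.log (((k : ℂ) - a) / ((k : ℂ) - b))) l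
          (nhds 0) := by
      intro l hl
      have h1 : Filter.Tendsto (fun k : ℝ => ((k : ℂ) - a) / ((k : ℂ) - b)) l (nhds 1) := by
        have h2 := ((bubble_inv_tendsto b l hl).const_mul (b - a)).const_add 1
        simp only [mul_zero, add_zero] at h2
        refine h2.congr fun k => ?_
        have := bubble_ne b hb k
        field_simp
        ring
      have h3 := (h1.clog (by simp)).const_mul (a - b)⁻¹
      simpa using h3
    have key := integral_of_hasDerivAt_of_tendsto
      (f := fun k : ℝ => (a - b)⁻¹ * Complex.log (((k : ℂ) - a) / ((k : ℂ) - b)))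
      (f' := fun k : ℝ => ((k : ℂ) - a)⁻¹ * ((k : ℂ) - b)⁻¹)
      (m := 0) (n := 0)
      (fun k => by
        have hka := bubble_ne a ha k
        have hkb := bubble_ne b hb k
        have hs : ((k : ℂ) - a) / ((k : ℂ) - b) ∈ Complex.slitPlane := by
          by_contra hns
          rw [Complex.mem_slitPlane_iff] at hns
          push Not at hns
          obtain ⟨hre, him⟩ := hns
          set q := ((k : ℂ) - a) / ((k : ℂ) - b) with hq
          have e : (k : ℂ) - a = q * ((k : ℂ) - b) := (div_mul_cancel₀ _ hkb).symm
          have e2 := congrArg Complex.im e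
          simp [him] at e2
          have : a.im * b.im = q.re * b.im ^ 2 := by rw [e2]; ring
          nlinarith [sq_nonneg b.im]
        have := (((bubble_deriv a k).fun_div (bubble_deriv b k) hkb).clog_real hs).const_mul
          (a - b)⁻¹
        refine this.congr_deriv ?_
        generalize hx : (k : ℂ) - a = x at *
        generalize hy : (k : ℂ) - b = y at *
        have hxy : a - b = y - x := by rw [← hx, ← hy]; ring
        rw [hxy] at hsub ⊢
        field_simp) (bubble_int a b ha hb) (hlim _ hbot) (hlim _ htop)
    simpa using key

lemma bubble_add4 {f g h l : ℝ → ℂ} (hf : Integrable f) (hg : Integrable g) (hh : Integrable h)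
    (hl : Integrable l) : ∫ k : ℝ, ((f k + g k) + (h k + l k)) =
      ((∫ k : ℝ, f k) + ∫ k : ℝ, g k) + ((∫ k : ℝ, h k) + ∫ k : ℝ, l k) := by
  rw [← integral_add hf hg, ← integral_add hh hl]
  exact integral_add (hf.add hg) (hh.add hl)

/-- Scaled version. -/
lemma bubble_gen (f g : ℝ → ℂ) (c d a b : ℂ) (hf : ∀ k : ℝ, f k = c * ((k : ℂ) - a)⁻¹)
    (hg : ∀ k : ℝ, g k = d * ((k : ℂ) - b)⁻¹) (ha : a.im ≠ 0) (hb : b.im ≠ 0) :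
    Integrable (fun k : ℝ => f k * g k) ∧
      (0 < a.im * b.im → ∫ k : ℝ, f k * g k = 0) := by
  have e : (fun k : ℝ => f k * g k) =
      fun k : ℝ => (c * d) * (((k : ℂ) - a)⁻¹ * ((k : ℂ) - b)⁻¹) := by
    funext k; rw [hf, hg]; ring
  rw [e]
  refine ⟨(bubble_int a b ha hb).const_mul _, fun h => ?_⟩
  rw [integral_const_mul, bubble_zero a b h, mul_zero]

theorem bubble_diagrammatic_cutting_equation
    (ω₁ ω₂ : ℂ) (hω₁ : ω₁.im < 0) (hω₂ : ω₂.im < 0) (p : ℝ)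
    (σ₁p σ₁m σ₂p σ₂m τ₁p τ₁m τ₂p τ₂m z₁ z₂ w₁ w₂ u₁ u₂ v₁ v₂ : ℝ → ℂ)
    (hσ₁p : ∀ k, σ₁p k = (1 / (2 * ω₁)) * ((k : ℂ) - ω₁)⁻¹)
    (hσ₁m : ∀ k, σ₁m k = -(1 / (2 * ω₁)) * ((k : ℂ) + ω₁)⁻¹)
    (hσ₂p : ∀ k, σ₂p k = (1 / (2 * ω₂)) * ((k : ℂ) - (p : ℂ) - ω₂)⁻¹)
    (hσ₂m : ∀ k, σ₂m k = -(1 / (2 * ω₂)) * ((k : ℂ) - (p : ℂ) + ω₂)⁻¹)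
    (hτ₁p : ∀ k, τ₁p k = -(starRingEnd ℂ) (σ₁m k))
    (hτ₁m : ∀ k, τ₁m k = -(starRingEnd ℂ) (σ₁p k))
    (hτ₂p : ∀ k, τ₂p k = -(starRingEnd ℂ) (σ₂m k))
    (hτ₂m : ∀ k, τ₂m k = -(starRingEnd ℂ) (σ₂p k))
    (hz₁ : ∀ k, z₁ k = σ₁p k + σ₁m k) (hz₂ : ∀ k, z₂ k = σ₂p k + σ₂m k)
    (hw₁ : ∀ k, w₁ k = τ₁p k + τ₁m k) (hw₂ : ∀ k, w₂ k = τ₂p k + τ₂m k)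
    (hu₁ : ∀ k, u₁ k = σ₁p k + τ₁m k) (hu₂ : ∀ k, u₂ k = σ₂p k + τ₂m k)
    (hv₁ : ∀ k, v₁ k = σ₁m k + τ₁p k) (hv₂ : ∀ k, v₂ k = σ₂m k + τ₂p k) :
    Integrable (fun k : ℝ => z₁ k * z₂ k) ∧
    Integrable (fun k : ℝ => w₁ k * w₂ k) ∧
    Integrable (fun k : ℝ => u₁ k * v₂ k) ∧
    Integrable (fun k : ℝ => v₁ k * u₂ k) ∧
    (∫ k : ℝ, z₁ k * z₂ k) + (∫ k : ℝ, w₁ k * w₂ k)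
      = (∫ k : ℝ, u₁ k * v₂ k) + (∫ k : ℝ, v₁ k * u₂ k) := by
  have n1 : ω₁.im ≠ 0 := hω₁.ne
  have n2 : ω₂.im ≠ 0 := hω₂.ne
  let C := starRingEnd ℂ
  have A1 : ∀ k : ℝ, σ₁p k = (1 / (2 * ω₁)) * ((k : ℂ) - ω₁)⁻¹ := hσ₁p
  have B1 : ∀ k : ℝ, σ₁m k = -(1 / (2 * ω₁)) * ((k : ℂ) - (-ω₁))⁻¹ := by
    intro k; rw [hσ₁m, sub_neg_eq_add]
  have A2 : ∀ k : ℝ, σ₂p k = (1 / (2 * ω₂)) * ((k : ℂ) - (p + ω₂))⁻¹ := by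
    intro k; rw [hσ₂p, sub_sub]
  have B2 : ∀ k : ℝ, σ₂m k = -(1 / (2 * ω₂)) * ((k : ℂ) - (p - ω₂))⁻¹ := by
    intro k; rw [hσ₂m, sub_sub_eq_add_sub, sub_add_eq_add_sub]
  have conjf : ∀ (f g : ℝ → ℂ) (c a : ℂ), (∀ k : ℝ, f k = c * ((k : ℂ) - a)⁻¹) →
      (∀ k, g k = -(starRingEnd ℂ) (f k)) →
      ∀ k : ℝ, g k = (-C c) * ((k : ℂ) - C a)⁻¹ := by
    intro f g c a hf hg k
    rw [hg, hf]; simp [C]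
  have C1 := conjf _ _ _ _ B1 hτ₁p
  have D1 := conjf _ _ _ _ A1 hτ₁m
  have C2 := conjf _ _ _ _ B2 hτ₂p
  have D2 := conjf _ _ _ _ A2 hτ₂m
  have pos : 0 < ω₁.im * ω₂.im := mul_pos_of_neg_of_neg hω₁ hω₂
  have aa := bubble_gen _ _ _ _ _ _ A1 A2 (by simp [C, n1]) (by simp [C, n2])
  have aaz := aa.2 (by simp [C, pos])
  have ab := bubble_gen _ _ _ _ _ _ A1 B2 (by simp [C, n1]) (by simp [C, n2])
  have ac := bubble_gen _ _ _ _ _ _ A1 C2 (by simp [C, n1]) (by simp [C, n2])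
  have acz := ac.2 (by simp [C, pos])
  have ad := bubble_gen _ _ _ _ _ _ A1 D2 (by simp [C, n1]) (by simp [C, n2])
  have ba := bubble_gen _ _ _ _ _ _ B1 A2 (by simp [C, n1]) (by simp [C, n2])
  have bb := bubble_gen _ _ _ _ _ _ B1 B2 (by simp [C, n1]) (by simp [C, n2])
  have bbz := bb.2 (by simp [C, pos])
  have bc := bubble_gen _ _ _ _ _ _ B1 C2 (by simp [C, n1]) (by simp [C, n2])
  have bd := bubble_gen _ _ _ _ _ _ B1 D2 (by simp [C, n1]) (by simp [C, n2])
  have bdz := bd.2 (by simp [C, pos])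
  have ca := bubble_gen _ _ _ _ _ _ C1 A2 (by simp [C, n1]) (by simp [C, n2])
  have caz := ca.2 (by simp [C, pos])
  have cb := bubble_gen _ _ _ _ _ _ C1 B2 (by simp [C, n1]) (by simp [C, n2])
  have cc := bubble_gen _ _ _ _ _ _ C1 C2 (by simp [C, n1]) (by simp [C, n2])
  have ccz := cc.2 (by simp [C, pos])
  have cd := bubble_gen _ _ _ _ _ _ C1 D2 (by simp [C, n1]) (by simp [C, n2])
  have da := bubble_gen _ _ _ _ _ _ D1 A2 (by simp [C, n1]) (by simp [C, n2])
  have db := bubble_gen _ _ _ _ _ _ D1 B2 (by simp [C, n1]) (by simp [C, n2])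
  have dbz := db.2 (by simp [C, pos])
  have dc := bubble_gen _ _ _ _ _ _ D1 C2 (by simp [C, n1]) (by simp [C, n2])
  have dd := bubble_gen _ _ _ _ _ _ D1 D2 (by simp [C, n1]) (by simp [C, n2])
  have ddz := dd.2 (by simp [C, pos])
  have eZ : (fun k : ℝ => z₁ k * z₂ k) = fun k : ℝ => (σ₁p k * σ₂p k + σ₁p k * σ₂m k) + (σ₁m k * σ₂p k + σ₁m k * σ₂m k) := by
    funext k; rw [hz₁, hz₂]; ring
  have iZ : Integrable (fun k : ℝ => z₁ k * z₂ k) := by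
    rw [eZ]; exact (aa.1.add ab.1).add (ba.1.add bb.1)
  have vZ : ∫ k : ℝ, z₁ k * z₂ k = ((∫ k : ℝ, σ₁p k * σ₂p k) + ∫ k : ℝ, σ₁p k * σ₂m k) + ((∫ k : ℝ, σ₁m k * σ₂p k) + ∫ k : ℝ, σ₁m k * σ₂m k) := by
    rw [eZ]; exact bubble_add4 aa.1 ab.1 ba.1 bb.1
  have eW : (fun k : ℝ => w₁ k * w₂ k) = fun k : ℝ => (τ₁p k * τ₂p k + τ₁p k * τ₂m k) + (τ₁m k * τ₂p k + τ₁m k * τ₂m k) := by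
    funext k; rw [hw₁, hw₂]; ring
  have iW : Integrable (fun k : ℝ => w₁ k * w₂ k) := by
    rw [eW]; exact (cc.1.add cd.1).add (dc.1.add dd.1)
  have vW : ∫ k : ℝ, w₁ k * w₂ k = ((∫ k : ℝ, τ₁p k * τ₂p k) + ∫ k : ℝ, τ₁p k * τ₂m k) + ((∫ k : ℝ, τ₁m k * τ₂p k) + ∫ k : ℝ, τ₁m k * τ₂m k) := by
    rw [eW]; exact bubble_add4 cc.1 cd.1 dc.1 dd.1
  have eU : (fun k : ℝ => u₁ k * v₂ k) = fun k : ℝ => (σ₁p k * σ₂m k + σ₁p k * τ₂p k) + (τ₁m k * σ₂m k + τ₁m k * τ₂p k) := by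
    funext k; rw [hu₁, hv₂]; ring
  have iU : Integrable (fun k : ℝ => u₁ k * v₂ k) := by
    rw [eU]; exact (ab.1.add ac.1).add (db.1.add dc.1)
  have vU : ∫ k : ℝ, u₁ k * v₂ k = ((∫ k : ℝ, σ₁p k * σ₂m k) + ∫ k : ℝ, σ₁p k * τ₂p k) + ((∫ k : ℝ, τ₁m k * σ₂m k) + ∫ k : ℝ, τ₁m k * τ₂p k) := by
    rw [eU]; exact bubble_add4 ab.1 ac.1 db.1 dc.1
  have eV : (fun k : ℝ => v₁ k * u₂ k) = fun k : ℝ => (σ₁m k * σ₂p k + σ₁m k * τ₂m k) + (τ₁p k * σ₂p k + τ₁p k * τ₂m k) := by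
    funext k; rw [hv₁, hu₂]; ring
  have iV : Integrable (fun k : ℝ => v₁ k * u₂ k) := by
    rw [eV]; exact (ba.1.add bd.1).add (ca.1.add cd.1)
  have vV : ∫ k : ℝ, v₁ k * u₂ k = ((∫ k : ℝ, σ₁m k * σ₂p k) + ∫ k : ℝ, σ₁m k * τ₂m k) + ((∫ k : ℝ, τ₁p k * σ₂p k) + ∫ k : ℝ, τ₁p k * τ₂m k) := by
    rw [eV]; exact bubble_add4 ba.1 bd.1 ca.1 cd.1
  refine ⟨iZ, iW, iU, iV, ?_⟩
  rw [vZ, vW, vU, vV, aaz, acz, bbz, bdz, caz, ccz, dbz, ddz]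
  ring
end

section
/- Let ω₁, ω₂, ω₃ ∈ ℂ with Im(ωᵢ) < 0 for i = 1, 2, 3, and let p, q ∈ ℝ. For k ∈ ℝ define σ₁^±(k) = ±(1/(2ω₁))·1/(k ∓ ω₁), σ₂^±(k) = ±(1/(2ω₂))·1/(k − p ∓ ω₂), σ₃^±(k) = ±(1/(2ω₃))·1/(k − q ∓ ω₃), and τᵢ^±(k) = −conj(σᵢ^∓(k)) (complex conjugation of the value). Set zᵢ = σᵢ⁺ + σᵢ⁻, wᵢ = τᵢ⁺ + τᵢ⁻, uᵢ = σᵢ⁺ + τᵢ⁻, vᵢ = σᵢ⁻ + τᵢ⁺ (pointwise in k). Then each of the eight functions z₁z₂z₃, w₁w₂w₃, u₁v₂z₃, z₁u₂v₃, v₁z₂u₃, v₁u₂w₃, w₁v₂u₃, u₁w₂v₃ is (Bochner) integrable on ℝ and ∫z₁z₂z₃ − ∫w₁w₂w₃ − ∫u₁v₂z₃ − ∫z₁u₂v₃ − ∫v₁z₂u₃ + ∫v₁u₂w₃ + ∫w₁v₂u₃ + ∫u₁w₂v₃ = 0, where all integrals are over k ∈ ℝ. -/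
open MeasureTheory Complex

/-- Continuous functions on the line decaying like the inverse of the distance. -/
def TriDecay (g : ℝ → ℂ) : Prop :=
  Continuous g ∧ ∃ C : ℝ, ∀ k : ℝ, ‖g k‖ * (1 + |k|) ≤ C

lemma TriDecay.add {f g : ℝ → ℂ} (hf : TriDecay f) (hg : TriDecay g) :
    TriDecay (fun k => f k + g k) := by
  obtain ⟨hf, C, hC⟩ := hf
  obtain ⟨hg, D, hD⟩ := hg
  refine ⟨hf.add hg, C + D, fun k => ?_⟩
  have h1 := norm_add_le (f k) (g k)
  have h2 : 0 ≤ 1 + |k| := by positivity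
  nlinarith [hC k, hD k, mul_le_mul_of_nonneg_right h1 h2]

lemma TriDecay.negconj {f : ℝ → ℂ} (hf : TriDecay f) :
    TriDecay (fun k => -(starRingEnd ℂ) (f k)) := by
  obtain ⟨hf, C, hC⟩ := hf
  refine ⟨(continuous_conj.comp hf).neg, C, fun k => ?_⟩
  simpa using hC k

lemma tri_bound (α : ℂ) (hα : α.im < 0) (c : ℂ) : ∃ C : ℝ, ∀ z : ℂ, 0 ≤ z.im →
    ‖c * (z - α)⁻¹‖ * (1 + ‖z‖) ≤ C := by
  refine ⟨‖c‖ * (1 + (1 + ‖α‖) / (-α.im)), fun z hz => ?_⟩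
  have h1 : -α.im ≤ ‖z - α‖ := by
    have := (le_abs_self _).trans (Complex.abs_im_le_norm (z - α))
    simp only [sub_im] at this
    linarith
  have h0 : 0 < ‖z - α‖ := by linarith
  have h2 : ‖z‖ ≤ ‖z - α‖ + ‖α‖ := by simpa using norm_add_le (z - α) α
  rw [norm_mul, norm_inv, mul_assoc]
  gcongr
  rw [inv_mul_le_iff₀ h0]
  have h3 : (1 + ‖α‖) ≤ ‖z - α‖ * ((1 + ‖α‖) / (-α.im)) := by
    rw [← mul_div_assoc, le_div_iff₀ (by linarith), mul_comm]
    gcongr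
  linarith

lemma tri_ne (α : ℂ) (hα : α.im < 0) (z : ℂ) (hz : 0 ≤ z.im) : z - α ≠ 0 := by
  intro h
  have := congrArg Complex.im h
  simp at this
  linarith

lemma TriDecay.pole (α : ℂ) (hα : α.im < 0) (c : ℂ) :
    TriDecay (fun k : ℝ => c * ((k : ℂ) - α)⁻¹) := by
  obtain ⟨C, hC⟩ := tri_bound α hα c
  refine ⟨?_, C, fun k => ?_⟩
  · refine continuous_const.mul (Continuous.inv₀ (by fun_prop) fun k => ?_)
    exact tri_ne α hα k (by simp)
  · simpa using hC k (by simp)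

lemma TriDecay.pole' (α : ℂ) (hα : 0 < α.im) (c : ℂ) :
    TriDecay (fun k : ℝ => c * ((k : ℂ) - α)⁻¹) := by
  have h := (TriDecay.pole ((starRingEnd ℂ) α) (by simpa using hα)
    (-(starRingEnd ℂ) c)).negconj
  simpa using h

lemma TriDecay.integrable {f g h : ℝ → ℂ} (hf : TriDecay f) (hg : TriDecay g)
    (hh : TriDecay h) : Integrable (fun k => f k * g k * h k) := by
  obtain ⟨hf, C, hC⟩ := hf
  obtain ⟨hg, D, hD⟩ := hg
  obtain ⟨hh, E, hE⟩ := hh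
  refine Integrable.mono' (g := fun k => C * D * E * (1 + k ^ 2)⁻¹)
    (integrable_inv_one_add_sq.const_mul _)
    ((hf.mul hg).mul hh).aestronglyMeasurable (Filter.Eventually.of_forall fun k => ?_)
  rw [← div_eq_mul_inv, le_div_iff₀ (by positivity), norm_mul, norm_mul]
  have h1 : 1 + k ^ 2 ≤ (1 + |k|) * (1 + |k|) * (1 + |k|) := by
    have := abs_nonneg k
    rw [← sq_abs]
    nlinarith [mul_nonneg this this, mul_nonneg (mul_nonneg this this) this]
  have hC0 : 0 ≤ C := le_trans (by positivity) (hC k)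
  have hD0 : 0 ≤ D := le_trans (by positivity) (hD k)
  calc _ ≤ ‖f k‖ * ‖g k‖ * ‖h k‖ * ((1 + |k|) * (1 + |k|) * (1 + |k|)) := by gcongr
    _ = (‖f k‖ * (1 + |k|)) * (‖g k‖ * (1 + |k|)) * (‖h k‖ * (1 + |k|)) := by ring
    _ ≤ C * D * E := by
      gcongr
      · exact hC k
      · exact hD k
      · exact hE k

/-- Cauchy's theorem for the closed upper half plane. -/
lemma tri_half_plane (f : ℂ → ℂ) (hf : DifferentiableOn ℂ f {z | 0 ≤ z.im}) (C : ℝ)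
    (hC : ∀ z : ℂ, 0 ≤ z.im → ‖f z‖ * (1 + ‖z‖) ^ 2 ≤ C)
    (hi : Integrable (fun k : ℝ => f k)) : ∫ k : ℝ, f k = 0 := by
  have hlim := intervalIntegral_tendsto_integral hi Filter.tendsto_neg_atTop_atBot
    Filter.tendsto_id
  refine tendsto_nhds_unique hlim ?_
  have hC' : ∀ R : ℝ, 0 < R → ∀ z : ℂ, 0 ≤ z.im → R ≤ ‖z‖ → ‖f z‖ ≤ C / R ^ 2 := by
    intro R hR z hz hRz
    rw [le_div_iff₀ (by positivity)]
    refine le_trans ?_ (hC z hz)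
    gcongr
    linarith
  refine squeeze_zero_norm' (a := fun R : ℝ => 4 * C * R⁻¹) ?_
    (by simpa using tendsto_inv_atTop_zero.const_mul (4 * C))
  filter_upwards [Filter.eventually_gt_atTop 0] with R hR
  have key := integral_boundary_rect_eq_zero_of_differentiableOn f ((-R : ℝ) : ℂ) (R + R * I)
    (hf.mono (by
      intro z hz
      have := (mem_reProdIm.1 hz).2
      simp [Set.uIcc_of_le hR.le] at this
      exact this.1))
  simp at key
  have b1 : ‖∫ x : ℝ in -R..R, f (x + R * I)‖ ≤ C / R ^ 2 * |R - -R| := by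
    refine intervalIntegral.norm_integral_le_of_norm_le_const fun x _ => ?_
    refine hC' R hR _ (by simp [hR.le]) ?_
    have := (le_abs_self _).trans (Complex.abs_im_le_norm (x + R * I : ℂ))
    simpa using this
  have b2 : ‖∫ y : ℝ in (0 : ℝ)..R, f (R + y * I)‖ ≤ C / R ^ 2 * |R - 0| := by
    refine intervalIntegral.norm_integral_le_of_norm_le_const fun y hy => ?_
    rw [Set.uIoc_of_le hR.le] at hy
    refine hC' R hR _ (by simp [hy.1.le]) ?_
    have := (le_abs_self _).trans (Complex.abs_re_le_norm (R + y * I : ℂ))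
    simpa using this
  have b3 : ‖∫ y : ℝ in (0 : ℝ)..R, f (-R + y * I)‖ ≤ C / R ^ 2 * |R - 0| := by
    refine intervalIntegral.norm_integral_le_of_norm_le_const fun y hy => ?_
    rw [Set.uIoc_of_le hR.le] at hy
    refine hC' R hR _ (by simp [hy.1.le]) ?_
    have := (neg_le_abs _).trans (Complex.abs_re_le_norm (-R + y * I : ℂ))
    simpa using this
  have e : (∫ x : ℝ in -R..R, f x) = (∫ x : ℝ in -R..R, f (x + R * I))
      - I * (∫ y : ℝ in (0 : ℝ)..R, f (R + y * I))
      + I * (∫ y : ℝ in (0 : ℝ)..R, f (-R + y * I)) := by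
    linear_combination key
  have n1 : ‖I * (∫ y : ℝ in (0 : ℝ)..R, f (R + y * I))‖ ≤ C / R ^ 2 * |R - 0| := by
    simpa using b2
  have n2 : ‖I * (∫ y : ℝ in (0 : ℝ)..R, f (-R + y * I))‖ ≤ C / R ^ 2 * |R - 0| := by
    simpa using b3
  have a1 : |R - -R| = 2 * R := by rw [abs_of_pos] <;> linarith
  have a2 : |R - 0| = R := by rw [abs_of_pos] <;> linarith
  rw [a1] at b1
  rw [a2] at n1 n2
  have e2 : C / R ^ 2 * (2 * R) + C / R ^ 2 * R + C / R ^ 2 * R = 4 * C * R⁻¹ := by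
    field_simp
    ring
  change ‖∫ x : ℝ in -R..R, f x‖ ≤ _
  rw [e, ← e2]
  exact (norm_add_le _ _).trans (add_le_add ((norm_sub_le _ _).trans (add_le_add b1 n1)) n2)

/-- Pairs of poles in the lower half plane. -/
def TriUpper (g : ℂ → ℂ) : Prop :=
  DifferentiableOn ℂ g {z | 0 ≤ z.im} ∧ ∃ C : ℝ, ∀ z : ℂ, 0 ≤ z.im → ‖g z‖ * (1 + ‖z‖) ≤ C

lemma TriUpper.pair (α β a b : ℂ) (hα : α.im < 0) (hβ : β.im < 0) :
    TriUpper (fun z => a * (z - α)⁻¹ + b * (z - β)⁻¹) := by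
  obtain ⟨C, hC⟩ := tri_bound α hα a
  obtain ⟨D, hD⟩ := tri_bound β hβ b
  refine ⟨?_, C + D, fun z hz => ?_⟩
  · intro z hz
    have h1 := tri_ne α hα z hz
    have h2 := tri_ne β hβ z hz
    exact DifferentiableAt.differentiableWithinAt (by fun_prop (disch := assumption))
  · have h1 := norm_add_le (a * (z - α)⁻¹) (b * (z - β)⁻¹)
    have h2 : 0 ≤ 1 + ‖z‖ := by positivity
    nlinarith [hC z hz, hD z hz, mul_le_mul_of_nonneg_right h1 h2]

lemma TriUpper.decay {f : ℂ → ℂ} (hf : TriUpper f) : TriDecay (fun k : ℝ => f k) := by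
  obtain ⟨hf, C, hC⟩ := hf
  refine ⟨?_, C, fun k => by simpa using hC k (by simp)⟩
  exact hf.continuousOn.comp_continuous continuous_ofReal (fun k => by simp)

lemma TriUpper.integral {f g h : ℂ → ℂ} (hf : TriUpper f) (hg : TriUpper g)
    (hh : TriUpper h) : ∫ k : ℝ, f k * g k * h k = 0 := by
  have hi := hf.decay.integrable hg.decay hh.decay
  obtain ⟨hf, C, hC⟩ := hf
  obtain ⟨hg, D, hD⟩ := hg
  obtain ⟨hh, E, hE⟩ := hh
  refine tri_half_plane (fun z => f z * g z * h z) ((hf.mul hg).mul hh) (C * D * E) ?_ hi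
  intro k hk
  have hC0 : 0 ≤ C := le_trans (by positivity) (hC k hk)
  have hD0 : 0 ≤ D := le_trans (by positivity) (hD k hk)
  rw [norm_mul, norm_mul]
  have h1 : (1 + ‖k‖) ^ 2 ≤ (1 + ‖k‖) ^ 3 :=
    pow_le_pow_right₀ (by linarith [norm_nonneg k]) (by norm_num)
  calc _ ≤ ‖f k‖ * ‖g k‖ * ‖h k‖ * (1 + ‖k‖) ^ 3 := by gcongr
    _ = (‖f k‖ * (1 + ‖k‖)) * (‖g k‖ * (1 + ‖k‖)) * (‖h k‖ * (1 + ‖k‖)) := by ring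
    _ ≤ C * D * E := by
      gcongr
      · exact hC k hk
      · exact hD k hk
      · exact hE k hk

/-- Everything needed about one propagator. -/
lemma tri_prop (ω : ℂ) (hω : ω.im < 0) (p : ℝ) (σp σm τp τm : ℝ → ℂ)
    (hσp : ∀ k : ℝ, σp k = (1 / (2 * ω)) * ((k : ℂ) - (p : ℂ) - ω)⁻¹)
    (hσm : ∀ k : ℝ, σm k = -(1 / (2 * ω)) * ((k : ℂ) - (p : ℂ) + ω)⁻¹)
    (hτp : ∀ k, τp k = -(starRingEnd ℂ) (σm k))
    (hτm : ∀ k, τm k = -(starRingEnd ℂ) (σp k)) :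
    TriDecay σp ∧ TriDecay σm ∧ TriDecay τp ∧ TriDecay τm ∧
    ∃ g : ℂ → ℂ, TriUpper g ∧ (∀ k : ℝ, σp k - τp k = g k) ∧
      ∀ k : ℝ, σm k - τm k = (starRingEnd ℂ) (g k) := by
  have h1 : TriDecay σp := by
    convert TriDecay.pole (p + ω) (by simpa using hω) (1 / (2 * ω)) using 1
    funext k
    rw [hσp, sub_sub]
  have h2 : TriDecay σm := by
    convert TriDecay.pole' (p - ω) (by simpa using hω) (-(1 / (2 * ω))) using 1
    funext k
    rw [hσm, sub_sub_eq_add_sub, sub_add_eq_add_sub]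
  have h3 : TriDecay τp := by
    rw [funext hτp]
    exact h2.negconj
  have h4 : TriDecay τm := by
    rw [funext hτm]
    exact h1.negconj
  have hg : ∀ k : ℝ, σp k - τp k = (1 / (2 * ω)) * ((k : ℂ) - (p + ω))⁻¹
      + (starRingEnd ℂ) (-(1 / (2 * ω))) * ((k : ℂ) - (p - (starRingEnd ℂ) ω))⁻¹ := by
    intro k
    rw [hτp, hσp, hσm, map_mul, map_inv₀, map_add, map_sub, conj_ofReal, conj_ofReal, sub_sub,
      sub_neg_eq_add, ← sub_add]
  refine ⟨h1, h2, h3, h4, _, TriUpper.pair (p + ω) (p - (starRingEnd ℂ) ω) (1 / (2 * ω))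
    ((starRingEnd ℂ) (-(1 / (2 * ω)))) (by simpa using hω) (by simpa using hω), hg, ?_⟩
  intro k
  rw [← hg k, hτp, hτm, map_sub, map_neg, conj_conj]
  ring


theorem triangle_diagrammatic_cutting_equation
    (ω₁ ω₂ ω₃ : ℂ) (hω₁ : ω₁.im < 0) (hω₂ : ω₂.im < 0) (hω₃ : ω₃.im < 0) (p q : ℝ)
    (σ₁p σ₁m σ₂p σ₂m σ₃p σ₃m τ₁p τ₁m τ₂p τ₂m τ₃p τ₃m : ℝ → ℂ)
    (z₁ z₂ z₃ w₁ w₂ w₃ u₁ u₂ u₃ v₁ v₂ v₃ : ℝ → ℂ)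
    (hσ₁p : ∀ k, σ₁p k = (1 / (2 * ω₁)) * ((k : ℂ) - ω₁)⁻¹)
    (hσ₁m : ∀ k, σ₁m k = -(1 / (2 * ω₁)) * ((k : ℂ) + ω₁)⁻¹)
    (hσ₂p : ∀ k, σ₂p k = (1 / (2 * ω₂)) * ((k : ℂ) - (p : ℂ) - ω₂)⁻¹)
    (hσ₂m : ∀ k, σ₂m k = -(1 / (2 * ω₂)) * ((k : ℂ) - (p : ℂ) + ω₂)⁻¹)
    (hσ₃p : ∀ k, σ₃p k = (1 / (2 * ω₃)) * ((k : ℂ) - (q : ℂ) - ω₃)⁻¹)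
    (hσ₃m : ∀ k, σ₃m k = -(1 / (2 * ω₃)) * ((k : ℂ) - (q : ℂ) + ω₃)⁻¹)
    (hτ₁p : ∀ k, τ₁p k = -(starRingEnd ℂ) (σ₁m k))
    (hτ₁m : ∀ k, τ₁m k = -(starRingEnd ℂ) (σ₁p k))
    (hτ₂p : ∀ k, τ₂p k = -(starRingEnd ℂ) (σ₂m k))
    (hτ₂m : ∀ k, τ₂m k = -(starRingEnd ℂ) (σ₂p k))
    (hτ₃p : ∀ k, τ₃p k = -(starRingEnd ℂ) (σ₃m k))
    (hτ₃m : ∀ k, τ₃m k = -(starRingEnd ℂ) (σ₃p k))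
    (hz₁ : ∀ k, z₁ k = σ₁p k + σ₁m k) (hz₂ : ∀ k, z₂ k = σ₂p k + σ₂m k)
    (hz₃ : ∀ k, z₃ k = σ₃p k + σ₃m k)
    (hw₁ : ∀ k, w₁ k = τ₁p k + τ₁m k) (hw₂ : ∀ k, w₂ k = τ₂p k + τ₂m k)
    (hw₃ : ∀ k, w₃ k = τ₃p k + τ₃m k)
    (hu₁ : ∀ k, u₁ k = σ₁p k + τ₁m k) (hu₂ : ∀ k, u₂ k = σ₂p k + τ₂m k)
    (hu₃ : ∀ k, u₃ k = σ₃p k + τ₃m k)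
    (hv₁ : ∀ k, v₁ k = σ₁m k + τ₁p k) (hv₂ : ∀ k, v₂ k = σ₂m k + τ₂p k)
    (hv₃ : ∀ k, v₃ k = σ₃m k + τ₃p k) :
    Integrable (fun k : ℝ => z₁ k * z₂ k * z₃ k) ∧
    Integrable (fun k : ℝ => w₁ k * w₂ k * w₃ k) ∧
    Integrable (fun k : ℝ => u₁ k * v₂ k * z₃ k) ∧
    Integrable (fun k : ℝ => z₁ k * u₂ k * v₃ k) ∧
    Integrable (fun k : ℝ => v₁ k * z₂ k * u₃ k) ∧
    Integrable (fun k : ℝ => v₁ k * u₂ k * w₃ k) ∧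
    Integrable (fun k : ℝ => w₁ k * v₂ k * u₃ k) ∧
    Integrable (fun k : ℝ => u₁ k * w₂ k * v₃ k) ∧
    (∫ k : ℝ, z₁ k * z₂ k * z₃ k) - (∫ k : ℝ, w₁ k * w₂ k * w₃ k)
      - (∫ k : ℝ, u₁ k * v₂ k * z₃ k) - (∫ k : ℝ, z₁ k * u₂ k * v₃ k)
      - (∫ k : ℝ, v₁ k * z₂ k * u₃ k) + (∫ k : ℝ, v₁ k * u₂ k * w₃ k)
      + (∫ k : ℝ, w₁ k * v₂ k * u₃ k) + (∫ k : ℝ, u₁ k * w₂ k * v₃ k) = 0 := by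
  obtain ⟨A1, B1, C1, D1, g1, G1, E1, F1⟩ := tri_prop ω₁ hω₁ 0 σ₁p σ₁m τ₁p τ₁m
    (by simpa using hσ₁p) (by simpa using hσ₁m) hτ₁p hτ₁m
  obtain ⟨A2, B2, C2, D2, g2, G2, E2, F2⟩ := tri_prop ω₂ hω₂ p σ₂p σ₂m τ₂p τ₂m
    hσ₂p hσ₂m hτ₂p hτ₂m
  obtain ⟨A3, B3, C3, D3, g3, G3, E3, F3⟩ := tri_prop ω₃ hω₃ q σ₃p σ₃m τ₃p τ₃m
    hσ₃p hσ₃m hτ₃p hτ₃m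
  have Z1 : TriDecay z₁ := by rw [funext hz₁]; exact A1.add B1
  have Z2 : TriDecay z₂ := by rw [funext hz₂]; exact A2.add B2
  have Z3 : TriDecay z₃ := by rw [funext hz₃]; exact A3.add B3
  have W1 : TriDecay w₁ := by rw [funext hw₁]; exact C1.add D1
  have W2 : TriDecay w₂ := by rw [funext hw₂]; exact C2.add D2
  have W3 : TriDecay w₃ := by rw [funext hw₃]; exact C3.add D3
  have U1 : TriDecay u₁ := by rw [funext hu₁]; exact A1.add D1
  have U2 : TriDecay u₂ := by rw [funext hu₂]; exact A2.add D2
  have U3 : TriDecay u₃ := by rw [funext hu₃]; exact A3.add D3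
  have V1 : TriDecay v₁ := by rw [funext hv₁]; exact B1.add C1
  have V2 : TriDecay v₂ := by rw [funext hv₂]; exact B2.add C2
  have V3 : TriDecay v₃ := by rw [funext hv₃]; exact B3.add C3
  have i1 := Z1.integrable Z2 Z3
  have i2 := W1.integrable W2 W3
  have i3 := U1.integrable V2 Z3
  have i4 := Z1.integrable U2 V3
  have i5 := V1.integrable Z2 U3
  have i6 := V1.integrable U2 W3
  have i7 := W1.integrable V2 U3
  have i8 := U1.integrable W2 V3
  refine ⟨i1, i2, i3, i4, i5, i6, i7, i8, ?_⟩
  have hI := G1.integral G2 G3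
  have hGint := G1.decay.integrable G2.decay G3.decay
  have hJ : ∫ k : ℝ, (starRingEnd ℂ) (g1 k * g2 k * g3 k) = 0 := by
    rw [integral_conj, hI, map_zero]
  have hJint : Integrable (fun k : ℝ => (starRingEnd ℂ) (g1 k * g2 k * g3 k)) := by
    have h := (conjCLE : ℂ →L[ℝ] ℂ).integrable_comp hGint
    simpa using h
  have j2 := i1.sub i2
  have j3 := j2.sub i3
  have j4 := j3.sub i4
  have j5 := j4.sub i5
  have j6 := j5.add i6
  have j7 := j6.add i7
  rw [← integral_sub' i1 i2, ← integral_sub' j2 i3, ← integral_sub' j3 i4, ← integral_sub' j4 i5,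
    ← integral_add' j5 i6, ← integral_add' j6 i7, ← integral_add' j7 i8]
  have hsum := integral_add hGint hJint
  rw [hI, hJ, add_zero] at hsum
  rw [← hsum]
  congr 1
  funext k
  simp only [Pi.sub_apply, Pi.add_apply, map_mul]
  rw [← F1, ← F2, ← F3, ← E1, ← E2, ← E3, hz₁, hz₂, hz₃, hw₁, hw₂, hw₃, hu₁, hu₂, hu₃,
    hv₁, hv₂, hv₃]
  ring
end

section
/- Let ζ₁⁺, ζ₁⁻, ξ₁⁺, ξ₁⁻, ζ₂⁺, ζ₂⁻, ξ₂⁺, ξ₂⁻ ∈ ℂ and let t ∈ ℝ with t ≠ 0. Let θ denote the Heaviside step function (θ(s) = 1 for s > 0, θ(s) = 0 for s < 0) and i the imaginary unit. For j = 1, 2 and s ∈ ℝ define z̃ⱼ(s) = iθ(s)e^{isζⱼ⁺} − iθ(−s)e^{isζⱼ⁻}, w̃ⱼ(s) = iθ(s)e^{isξⱼ⁺} − iθ(−s)e^{isξⱼ⁻}, ũⱼ(s) = iθ(s)e^{isζⱼ⁺} − iθ(−s)e^{isξⱼ⁻}, ṽⱼ(s) = iθ(s)e^{isξⱼ⁺}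 − iθ(−s)e^{isζⱼ⁻}. Then z̃₁(t)·z̃₂(−t) + w̃₁(t)·w̃₂(−t) − ũ₁(t)·ṽ₂(−t) − ṽ₁(t)·ũ₂(−t) = 0. -/
open Complex

/-- The Heaviside step function. -/
noncomputable def heaviside (s : ℝ) : ℝ := if 0 < s then 1 else 0

theorem bubble_largest_time_equation
    (ζ₁p ζ₁m ξ₁p ξ₁m ζ₂p ζ₂m ξ₂p ξ₂m : ℂ) (t : ℝ) (ht : t ≠ 0)
    (zt₁ zt₂ wt₁ wt₂ ut₁ ut₂ vt₁ vt₂ : ℝ → ℂ)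
    (hzt₁ : ∀ s, zt₁ s = Complex.I * (heaviside s : ℂ) * Complex.exp (Complex.I * s * ζ₁p)
        - Complex.I * (heaviside (-s) : ℂ) * Complex.exp (Complex.I * s * ζ₁m))
    (hzt₂ : ∀ s, zt₂ s = Complex.I * (heaviside s : ℂ) * Complex.exp (Complex.I * s * ζ₂p)
        - Complex.I * (heaviside (-s) : ℂ) * Complex.exp (Complex.I * s * ζ₂m))
    (hwt₁ : ∀ s, wt₁ s = Complex.I * (heaviside s : ℂ) * Complex.exp (Complex.I * s * ξ₁p)
        - Complex.I * (heaviside (-s) : ℂ) * Complex.exp (Complex.I * s * ξ₁m))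
    (hwt₂ : ∀ s, wt₂ s = Complex.I * (heaviside s : ℂ) * Complex.exp (Complex.I * s * ξ₂p)
        - Complex.I * (heaviside (-s) : ℂ) * Complex.exp (Complex.I * s * ξ₂m))
    (hut₁ : ∀ s, ut₁ s = Complex.I * (heaviside s : ℂ) * Complex.exp (Complex.I * s * ζ₁p)
        - Complex.I * (heaviside (-s) : ℂ) * Complex.exp (Complex.I * s * ξ₁m))
    (hut₂ : ∀ s, ut₂ s = Complex.I * (heaviside s : ℂ) * Complex.exp (Complex.I * s * ζ₂p)
        - Complex.I * (heaviside (-s) : ℂ) * Complex.exp (Complex.I * s * ξ₂m))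
    (hvt₁ : ∀ s, vt₁ s = Complex.I * (heaviside s : ℂ) * Complex.exp (Complex.I * s * ξ₁p)
        - Complex.I * (heaviside (-s) : ℂ) * Complex.exp (Complex.I * s * ζ₁m))
    (hvt₂ : ∀ s, vt₂ s = Complex.I * (heaviside s : ℂ) * Complex.exp (Complex.I * s * ξ₂p)
        - Complex.I * (heaviside (-s) : ℂ) * Complex.exp (Complex.I * s * ζ₂m)) :
    zt₁ t * zt₂ (-t) + wt₁ t * wt₂ (-t) - ut₁ t * vt₂ (-t) - vt₁ t * ut₂ (-t) = 0 := by
  rw [hzt₁, hzt₂, hwt₁, hwt₂, hut₁, hut₂, hvt₁, hvt₂, neg_neg]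
  rcases lt_or_gt_of_ne ht with h | h
  · have h1 : heaviside t = 0 := if_neg (not_lt.mpr h.le)
    have h2 : heaviside (-t) = 1 := if_pos (neg_pos.mpr h)
    rw [h1, h2]
    push_cast
    ring
  · have h1 : heaviside t = 1 := if_pos h
    have h2 : heaviside (-t) = 0 := if_neg (by linarith)
    rw [h1, h2]
    push_cast
    ring
end

section
/- Let G be a finite connected simple graph with vertex set V and edge set E, and let L = |E| − |V| + 1. Then there exist an orientation of G (a choice, for each edge, of an ordered pair (tail, head) of its two endpoints) and closed walks c₁, …, c_L in G, each of which is a cycle (a closed walk with no repeated vertices other than its endpoint, in particular traversing each of its edges exactly once), such that every step of every cⱼ traverses its edge from the chosen tail to the chosen head, and such that the edge-indicator vectors of c₁, …, c_L (the elements of ℝ^E assigning 1 to the edges traversed by cⱼ and 0 to the others) are linearly independent over ℝ. -/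
open SimpleGraph

namespace DFS

/-- `p` is the parent map and `d` the depth map of a spanning tree of `G` rooted at `r`. -/
structure IsTree' {V : Type*} (G : SimpleGraph V) (r : V) (p : V → V) (d : V → ℕ) : Prop where
  pr : p r = r
  dr : d r = 0
  adj : ∀ w, w ≠ r → G.Adj w (p w)
  dp : ∀ w, w ≠ r → d w = d (p w) + 1

variable {V : Type*} {G : SimpleGraph V} {r : V} {p : V → V} {d : V → ℕ}

lemma exists_tree (hG : G.Connected) (r : V) : ∃ p d, IsTree' G r p d := by
  classical
  have h : ∀ w, ∃ x, (w = r → x = r) ∧ (w ≠ r → G.Adj w x ∧ G.dist w r = G.dist x r + 1) := by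
    intro w
    by_cases hw : w = r
    · exact ⟨r, fun _ => rfl, fun h => absurd hw h⟩
    · obtain ⟨q, hq⟩ := hG.exists_walk_length_eq_dist w r
      cases q with
      | nil => exact absurd rfl hw
      | @cons _ x _ hadj q =>
        refine ⟨x, fun h => absurd h hw, fun _ => ⟨hadj, ?_⟩⟩
        have h1 := SimpleGraph.dist_le q
        have h2 := hG.dist_triangle (u := w) (v := x) (w := r)
        have h3 := SimpleGraph.dist_eq_one_iff_adj.mpr hadj
        simp only [Walk.length_cons] at hq
        omega
  choose p hp hp' using h
  exact ⟨p, fun w => G.dist w r, hp r rfl, by simp, fun w hw => (hp' w hw).1,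
    fun w hw => (hp' w hw).2⟩

lemma IsTree'.iter_le (h : IsTree' G r p d) (w : V) (n : ℕ) : d (p^[n] w) = d w - n := by
  induction n generalizing w with
  | zero => simp
  | succ n ih =>
    rw [Function.iterate_succ_apply, ih]
    by_cases hw : w = r
    · subst hw; rw [h.pr, h.dr]; simp
    · rw [h.dp w hw]; omega

lemma IsTree'.lt_card [Fintype V] (h : IsTree' G r p d) (w : V) : d w < Fintype.card V := by
  have : Function.Injective (fun i : Fin (d w + 1) => p^[i.1] w) := by
    intro i j hij
    have := congrArg d hij
    simp only [h.iter_le] at this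
    ext; omega
  have := Fintype.card_le_of_injective _ this
  simp at this; omega

lemma IsTree'.iter_root (h : IsTree' G r p d) (w : V) : p^[d w] w = r := by
  by_contra hne
  have h1 := h.dp _ hne
  have h2 := h.iter_le w (d w)
  omega

lemma exists_normal [Fintype V] (hG : G.Connected) (r : V) :
    ∃ p d, IsTree' G r p d ∧ ∀ u v, G.Adj u v → d u ≤ d v → ∃ n, p^[n] v = u := by
  classical
  let S : Set ℕ := {s | ∃ p d, IsTree' G r p d ∧ s = ∑ w, d w}
  have hne : S.Nonempty := by
    obtain ⟨p, d, h⟩ := exists_tree hG r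
    exact ⟨_, p, d, h, rfl⟩
  have hb : BddAbove S := by
    refine ⟨∑ _w : V, Fintype.card V, ?_⟩
    rintro s ⟨p, d, h, rfl⟩
    exact Finset.sum_le_sum fun w _ => (h.lt_card w).le
  obtain ⟨p, d, h, hs⟩ := Nat.sSup_mem hne hb
  refine ⟨p, d, h, fun u v huv hle => ?_⟩
  by_contra! hno
  have hur : u ≠ r := fun hu => hno (d v) (by rw [h.iter_root, hu])
  let D : V → Prop := fun w => ∃ n, p^[n] w = u
  have hDu : D u := ⟨0, rfl⟩
  have hDv : ¬ D v := fun ⟨n, hn⟩ => hno n hn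
  have hDr : ¬ D r := by
    rintro ⟨n, hn⟩
    rw [Function.iterate_fixed h.pr] at hn
    exact hur hn.symm
  have hDp : ∀ w, w ≠ u → (D (p w) ↔ D w) := by
    intro w hw
    constructor
    · rintro ⟨n, hn⟩; exact ⟨n + 1, by rwa [Function.iterate_succ_apply]⟩
    · rintro ⟨n, hn⟩
      cases n with
      | zero => exact absurd hn hw
      | succ n => exact ⟨n, by rwa [Function.iterate_succ_apply] at hn⟩
  let d' : V → ℕ := fun w => d w + if D w then d v + 1 - d u else 0
  have hT : IsTree' G r (Function.update p u v) d' := by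
    refine ⟨?_, ?_, fun w hw => ?_, fun w hw => ?_⟩
    · rw [Function.update_of_ne hur.symm, h.pr]
    · simp [d', hDr, h.dr]
    · by_cases hwu : w = u
      · subst hwu; simpa using huv
      · rw [Function.update_of_ne hwu]; exact h.adj w hw
    · by_cases hwu : w = u
      · subst hwu
        simp only [Function.update_self, d', if_pos hDu, if_neg hDv]; omega
      · rw [Function.update_of_ne hwu]
        simp only [d', hDp w hwu, h.dp w hw]; omega
  have hlt : ∑ w, d w < ∑ w, d' w := by
    refine Finset.sum_lt_sum (fun w _ => Nat.le_add_right _ _) ⟨u, Finset.mem_univ _, ?_⟩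
    simp only [d', if_pos hDu]; omega
  have := le_csSup hb (show ∑ w, d' w ∈ S from ⟨_, _, hT, rfl⟩)
  omega

lemma IsTree'.exists_path (h : IsTree' G r p d) (n : ℕ) (v a : V) (ha : p^[n] v = a) :
    ∃ q : G.Walk a v, q.IsPath ∧ (∀ x ∈ q.support, d x ≤ d v) ∧
      ∀ e ∈ q.darts, e.toProd.2 ≠ r ∧ e.toProd.1 = p e.toProd.2 := by
  induction n generalizing v with
  | zero =>
    obtain rfl : v = a := ha
    exact ⟨Walk.nil, by simp, by simp, by simp⟩
  | succ n ih =>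
    rw [Function.iterate_succ_apply] at ha
    by_cases hv : v = r
    · subst hv; rw [h.pr] at ha; exact ih _ ha
    · obtain ⟨q, hq, hs, hd⟩ := ih _ ha
      have hdv := h.dp v hv
      refine ⟨q.concat (h.adj v hv).symm, hq.concat ?_ _, ?_, ?_⟩
      · intro hm; have := hs _ hm; omega
      · intro x hx
        rw [Walk.support_concat] at hx
        simp only [List.mem_append, List.mem_singleton] at hx
        rcases hx with hx | rfl
        · have := hs _ hx; omega
        · exact le_rfl
      · intro e he
        rw [Walk.darts_concat] at he
        simp only [List.concat_eq_append, List.mem_append, List.mem_singleton] at he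
        rcases he with he | rfl
        · exact hd _ he
        · exact ⟨hv, rfl⟩

end DFS

open DFS in
theorem exists_orientation_and_independent_cycles
    {V : Type*} [Fintype V] [DecidableEq V]
    (G : SimpleGraph V) [DecidableRel G.Adj] (hG : G.Connected) :
    ∃ (tail head : Sym2 V → V)
      (c : Fin (G.edgeFinset.card + 1 - Fintype.card V) → Σ v : V, G.Walk v v),
      (∀ e ∈ G.edgeSet, e = s(tail e, head e)) ∧
      (∀ j, ((c j).2).IsCycle) ∧
      (∀ j, ∀ d ∈ ((c j).2).darts,
        tail d.edge = d.toProd.1 ∧ head d.edge = d.toProd.2) ∧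
      LinearIndependent ℝ
        (fun j => fun e : Sym2 V => if e ∈ ((c j).2).edges then (1 : ℝ) else 0) := by
  obtain ⟨r⟩ := hG.nonempty
  obtain ⟨p, d, h, hN⟩ := exists_normal hG r
  -- the tree edges
  let T : Finset (Sym2 V) := (Finset.univ.erase r).image fun w => s(w, p w)
  have hTc : T.card ≤ Fintype.card V - 1 := by
    refine Finset.card_image_le.trans ?_
    rw [Finset.card_erase_of_mem (Finset.mem_univ _), Finset.card_univ]
  have hTm : ∀ e, e ∈ T ↔ ∃ w, w ≠ r ∧ s(w, p w) = e := by simp [T]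
  have hdlt : ∀ u v, G.Adj u v → d u ≤ d v → d u < d v := by
    intro u v huv hle
    obtain ⟨n, hn⟩ := hN u v huv hle
    have h1 := h.iter_le v n
    rw [hn] at h1
    rcases Nat.eq_zero_or_pos n with rfl | hpos
    · exact absurd hn.symm huv.ne
    · rcases Nat.eq_zero_or_pos (d v) with h0 | h0
      · have hv := h.iter_root v
        have hu := h.iter_root u
        rw [h0] at hv
        rw [show d u = 0 by omega] at hu
        exact absurd (hu.trans hv.symm) huv.ne
      · omega
  have hlohi : ∀ e : Sym2 V, ∃ x : V × V, e ∈ G.edgeSet → e = s(x.1, x.2) ∧ d x.1 < d x.2 := by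
    intro e
    induction e with | _ a b
    by_cases hab : G.Adj a b
    · rcases le_total (d a) (d b) with hle | hle
      · exact ⟨(a, b), fun _ => ⟨rfl, hdlt _ _ hab hle⟩⟩
      · exact ⟨(b, a), fun _ => ⟨Sym2.eq_swap, hdlt _ _ hab.symm hle⟩⟩
    · exact ⟨(a, b), fun he => absurd he hab⟩
  choose x hx using hlohi
  have hxu : ∀ a b, G.Adj a b → d a < d b → x s(a, b) = (a, b) := by
    intro a b hab hlt
    obtain ⟨h1, h2⟩ := hx s(a, b) hab
    rcases Sym2.eq_iff.mp h1 with ⟨h3, h4⟩ | ⟨h3, h4⟩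
    · exact Prod.ext h3.symm h4.symm
    · rw [← h3, ← h4] at h2; omega
  have hcyc : ∀ e : Sym2 V, ∃ c : Σ v : V, G.Walk v v, e ∈ G.edgeFinset \ T →
      c.2.IsCycle ∧ (∀ f ∈ c.2.edges, f = e ∨ f ∈ T) ∧ e ∈ c.2.edges ∧
      ∀ f ∈ c.2.darts, (f.edge ∈ T ∧ x f.edge = f.toProd) ∨
        (f.edge ∉ T ∧ x f.edge = f.toProd.swap) := by
    intro e
    by_cases he : e ∈ G.edgeFinset \ T
    swap
    · exact ⟨⟨r, Walk.nil⟩, fun h => absurd h he⟩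
    obtain ⟨heG, heT⟩ := Finset.mem_sdiff.mp he
    rw [mem_edgeFinset] at heG
    obtain ⟨h1, h2⟩ := hx e heG
    generalize x e = ab at h1 h2
    obtain ⟨a, b⟩ := ab
    simp only at h1 h2
    subst h1
    have hab : G.Adj a b := heG
    obtain ⟨n, hn⟩ := hN a b hab h2.le
    obtain ⟨q, hq, -, hqd⟩ := h.exists_path n b a hn
    have hqT : ∀ f ∈ q.edges, f ∈ T := by
      intro f hf
      obtain ⟨g, hg, rfl⟩ := List.mem_map.mp hf
      obtain ⟨h3, h4⟩ := hqd g hg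
      refine (hTm _).mpr ⟨_, h3, ?_⟩
      rw [← h4, Sym2.eq_swap]; rfl
    refine ⟨⟨b, Walk.cons hab.symm q⟩, fun _ => ⟨?_, ?_, ?_, ?_⟩⟩
    · rw [Walk.cons_isCycle_iff]
      refine ⟨hq, fun hm => heT ?_⟩
      rw [Sym2.eq_swap]; exact hqT _ hm
    · intro f hf
      rw [Walk.edges_cons, List.mem_cons] at hf
      rcases hf with rfl | hf
      · exact Or.inl Sym2.eq_swap
      · exact Or.inr (hqT f hf)
    · rw [Walk.edges_cons, Sym2.eq_swap]; exact List.mem_cons_self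
    · intro f hf
      rw [Walk.darts_cons, List.mem_cons] at hf
      rcases hf with rfl | hf
      · right
        have : (Dart.mk (b, a) hab.symm : G.Dart).edge = s(a, b) := Sym2.eq_swap
        rw [this]
        exact ⟨heT, hxu a b hab h2⟩
      · left
        refine ⟨hqT _ (List.mem_map.mpr ⟨f, hf, rfl⟩), ?_⟩
        obtain ⟨h3, h4⟩ := hqd f hf
        have h5 := h.dp _ h3
        rw [← h4] at h5
        exact hxu _ _ f.adj (by omega)
  choose c hc using hcyc
  have hcard : G.edgeFinset.card + 1 - Fintype.card V ≤ (G.edgeFinset \ T).card := by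
    have h1 := Finset.le_card_sdiff T G.edgeFinset
    have : 0 < Fintype.card V := Fintype.card_pos_iff.mpr ⟨r⟩
    omega
  obtain ⟨ι⟩ : Nonempty (Fin (G.edgeFinset.card + 1 - Fintype.card V) ↪
      ↥(G.edgeFinset \ T)) := by
    apply Function.Embedding.nonempty_of_card_le
    rw [Fintype.card_fin, Fintype.card_coe]; exact hcard
  refine ⟨fun e => if e ∈ T then (x e).1 else (x e).2,
    fun e => if e ∈ T then (x e).2 else (x e).1, fun j => c (ι j).1, ?_, ?_, ?_, ?_⟩
  · intro e he
    have h1 := (hx e he).1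
    by_cases heT : e ∈ T
    · simpa only [if_pos heT] using h1
    · simp only [if_neg heT]
      exact h1.trans Sym2.eq_swap
  · intro j
    exact (hc _ (ι j).2).1
  · intro j f hf
    rcases (hc _ (ι j).2).2.2.2 f hf with ⟨h1, h2⟩ | ⟨h1, h2⟩
    · simp [h1, h2]
    · simp [h1, h2]
  · rw [Fintype.linearIndependent_iff]
    intro g hg i
    have h1 := congrFun hg (ι i).1
    simp only [Finset.sum_apply, Pi.smul_apply, smul_eq_mul, Pi.zero_apply] at h1
    rw [Finset.sum_eq_single i] at h1
    · rw [if_pos (hc _ (ι i).2).2.2.1] at h1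
      simpa using h1
    · intro j _ hji
      rw [if_neg, mul_zero]
      intro hm
      rcases (hc _ (ι j).2).2.1 _ hm with h2 | h2
      · exact hji (ι.injective (Subtype.ext h2)).symm
      · exact (Finset.mem_sdiff.mp (ι i).2).2 h2
    · intro h; exact absurd (Finset.mem_univ _) h
end
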